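/- arXiv:1602.02458 — 2 statements merged into one kernel-verified Lean document; each statement's English description precedes it below -/
import Mathlib

section
/- Let γ : I → ℝ³ be a C^∞ curve on an open interval I. If γ'(t₀), γ''(t₀), γ'''(t₀) are linearly dependent while γ'(t₀), γ''(t₀), γ⁽⁴⁾(t₀) are linearly independent, then the tangent surface f(t,s) = γ(t) + s γ'(t) is, as a germ at (t₀, 0) ∈ I × ℝ, diffeomorphic to the folded umbrella (t,s) ↦ (t+s, t²+2st, t⁴+4st³). -/
open Set

noncomputable section

/-- `σ` is a `C^∞` diffeomorphism from the open set `U` onto its open image. -/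
def SmoothDiffeoOn {E F : Type*} [NormedAddCommGroup E] [NormedSpace ℝ E]
    [NormedAddCommGroup F] [NormedSpace ℝ F] (σ : E → F) (U : Set E) : Prop :=
  IsOpen U ∧ IsOpen (σ '' U) ∧ ContDiffOn ℝ (⊤ : ℕ∞) σ U ∧
    ∃ σinv : F → E, ContDiffOn ℝ (⊤ : ℕ∞) σinv (σ '' U) ∧ ∀ x ∈ U, σinv (σ x) = x

/-- The map-germ of `f` at `p` is diffeomorphic to the map-germ of `g` at `q`:
there are open neighborhoods `U ∋ p`, `V ∋ f p` and `C^∞` diffeomorphisms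
`σ` from `U` onto an open neighborhood of `q`, `τ` from `V` onto an open
neighborhood of `g q`, with `σ p = q`, `τ (f p) = g q`, `f(U) ⊆ V` and
`τ ∘ f = g ∘ σ` on `U`. -/
def GermDiffeomorphic {E F : Type*} [NormedAddCommGroup E] [NormedSpace ℝ E]
    [NormedAddCommGroup F] [NormedSpace ℝ F]
    (f : E → F) (p : E) (g : E → F) (q : E) : Prop :=
  ∃ (U : Set E) (V : Set F) (σ : E → E) (τ : F → F),
    SmoothDiffeoOn σ U ∧ SmoothDiffeoOn τ V ∧
    p ∈ U ∧ f p ∈ V ∧ σ p = q ∧ τ (f p) = g q ∧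
    (∀ x ∈ U, f x ∈ V) ∧ ∀ x ∈ U, τ (f x) = g (σ x)

section Helpers

open scoped ContDiff Topology
open MeasureTheory Filter


theorem cut_off {E : Type} [NormedAddCommGroup E] [NormedSpace ℝ E] [FiniteDimensional ℝ E]
    (g : E → ℝ) (p : E) (hg : ∀ᶠ x in 𝓝 p, ContDiffAt ℝ ∞ g x) :
    ∃ g' : E → ℝ, ContDiff ℝ ∞ g' ∧ HasCompactSupport g' ∧ g' =ᶠ[𝓝 p] g := by
  obtain ⟨r, hr, hball⟩ := Metric.eventually_nhds_iff_ball.1 hg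
  let b : ContDiffBump p := ⟨r / 4, r / 2, by positivity, by linarith⟩
  refine ⟨fun x => b x * g x, ?_, ?_, ?_⟩
  · rw [contDiff_iff_contDiffAt]
    intro x
    by_cases hx : x ∈ Metric.ball p r
    · exact b.contDiff.contDiffAt.mul (hball x hx)
    · have : (fun x => b x * g x) =ᶠ[𝓝 x] fun _ => 0 := by
        have hx' : x ∉ tsupport b := by
          rw [b.tsupport_eq]
          intro h
          apply hx
          have : dist x p ≤ r / 2 := h
          simp only [Metric.mem_ball]; linarith
        have := (isClosed_tsupport b).isOpen_compl.mem_nhds hx'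
        filter_upwards [this] with y hy
        rw [image_eq_zero_of_notMem_tsupport hy, zero_mul]
      exact contDiffAt_const.congr_of_eventuallyEq this
  · exact b.hasCompactSupport.mul_right
  · filter_upwards [b.eventuallyEq_one] with x hx
    simp [hx]

theorem contDiff_integral_param_aux {E A : Type} [NormedAddCommGroup E] [NormedSpace ℝ E]
    [NormedAddCommGroup A] [NormedSpace ℝ A] [MeasurableSpace A] [BorelSpace A]
    [SecondCountableTopology A] (μ : Measure A) (n : ℕ) :
    ∀ {G : Type} [NormedAddCommGroup G] [NormedSpace ℝ G] [CompleteSpace G] (F : E → A → G)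
    (_ : ContDiff ℝ ∞ (fun p : E × A => F p.1 p.2))
    (_ : ∀ n : ℕ, ∀ r : ℝ, ∃ b : A → ℝ, Integrable b μ ∧ ∀ᵐ a ∂μ, ∀ x : E, ‖x‖ < r →
      ‖iteratedFDeriv ℝ n (fun x => F x a) x‖ ≤ b a),
    ContDiff ℝ n (fun x => ∫ a, F x a ∂μ) := by
  have key : ∀ {G : Type} [NormedAddCommGroup G] [NormedSpace ℝ G] [CompleteSpace G]
    (F : E → A → G)
    (_ : ContDiff ℝ ∞ (fun p : E × A => F p.1 p.2))
    (_ : ∀ n : ℕ, ∀ r : ℝ, ∃ b : A → ℝ, Integrable b μ ∧ ∀ᵐ a ∂μ, ∀ x : E, ‖x‖ < r →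
      ‖iteratedFDeriv ℝ n (fun x => F x a) x‖ ≤ b a) (x : E),
      HasFDerivAt (fun x => ∫ a, F x a ∂μ) (∫ a, fderiv ℝ (fun x => F x a) x ∂μ) x := by
    intro G _ _ _ F hF hb x
    have hx : Metric.ball (0 : E) (‖x‖ + 1) ∈ 𝓝 x :=
      Metric.isOpen_ball.mem_nhds (by simp)
    have hm : ∀ x, AEStronglyMeasurable (F x) μ := fun x => by
      have : Continuous (F x) := hF.continuous.comp (by fun_prop : Continuous fun a => (x, a))
      exact this.aestronglyMeasurable
    have hsm : ∀ a, ContDiff ℝ ∞ (fun x => F x a) := fun a =>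
      hF.comp (by fun_prop : ContDiff ℝ ∞ fun x : E => (x, a))
    obtain ⟨b, hbi, hbb⟩ := hb 1 (‖x‖ + 1)
    obtain ⟨b0, hbi0, hbb0⟩ := hb 0 (‖x‖ + 1)
    refine hasFDerivAt_integral_of_dominated_of_fderiv_le (bound := b)
      (F' := fun x a => fderiv ℝ (fun x => F x a) x) hx (Eventually.of_forall hm) ?_ ?_ ?_ hbi ?_
    · refine hbi0.mono' (hm x) ?_
      filter_upwards [hbb0] with a ha
      simpa using ha x (by simp)
    · have : Continuous fun a => fderiv ℝ (fun x => F x a) x := by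
        have : ContDiff ℝ 0 fun a => fderiv ℝ (fun x => F x a) x := by
          refine ContDiff.fderiv (m := 1) (n := 0) (f := fun a x => F x a) ?_ contDiff_const (by norm_num)
          exact (hF.of_le (by exact_mod_cast le_top)).comp
            (by fun_prop : ContDiff ℝ 1 fun p : A × E => (p.2, p.1))
        exact this.continuous
      exact this.aestronglyMeasurable
    · filter_upwards [hbb] with a ha y hy
      have := ha y (by simpa using hy)
      rwa [← norm_iteratedFDeriv_fderiv, norm_iteratedFDeriv_zero] at this
    · refine Eventually.of_forall fun a y _ => ?_
      exact ((hsm a).differentiable (by simp) y).hasFDerivAt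
  induction n with
  | zero =>
    intro G _ _ _ F hF hb
    refine contDiff_zero.2 ?_
    exact continuous_iff_continuousAt.2 fun x => (key F hF hb x).continuousAt
  | succ n ih =>
    intro G _ _ _ F hF hb
    have h1 : ContDiff ℝ n (fun x => ∫ a, fderiv ℝ (fun x => F x a) x ∂μ) := by
      apply ih (fun x a => fderiv ℝ (fun x => F x a) x)
      · refine ContDiff.fderiv (m := ∞) (n := ∞) (f := fun (p : E × A) x => F x p.2) ?_ contDiff_fst
          (by simp)
        exact hF.comp (by fun_prop : ContDiff ℝ ∞ fun p : (E × A) × E => (p.2, p.1.2))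
      · intro m r
        obtain ⟨b, hbi, hbb⟩ := hb (m + 1) r
        refine ⟨b, hbi, ?_⟩
        filter_upwards [hbb] with a ha x hx
        have := ha x hx
        rwa [← norm_iteratedFDeriv_fderiv] at this
    have := contDiff_succ_iff_hasFDerivAt (𝕜 := ℝ) (n := n) (f := fun x => ∫ a, F x a ∂μ)
    push_cast
    exact this.2 ⟨_, h1, fun x => key F hF hb x⟩

theorem contDiff_integral_param {E A : Type} [NormedAddCommGroup E] [NormedSpace ℝ E]
    [NormedAddCommGroup A] [NormedSpace ℝ A] [MeasurableSpace A] [BorelSpace A]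
    [SecondCountableTopology A] (μ : Measure A)
    {G : Type} [NormedAddCommGroup G] [NormedSpace ℝ G] [CompleteSpace G] (F : E → A → G)
    (hF : ContDiff ℝ ∞ (fun p : E × A => F p.1 p.2))
    (hb : ∀ n : ℕ, ∀ r : ℝ, ∃ b : A → ℝ, Integrable b μ ∧ ∀ᵐ a ∂μ, ∀ x : E, ‖x‖ < r →
      ‖iteratedFDeriv ℝ n (fun x => F x a) x‖ ≤ b a) :
    ContDiff ℝ ∞ (fun x => ∫ a, F x a ∂μ) :=
  contDiff_infty.2 fun n => contDiff_integral_param_aux μ n F hF hb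

/-- Joint continuity of the iterated partial derivative. -/
theorem iter_partial_cont {E A : Type} [NormedAddCommGroup E] [NormedSpace ℝ E]
    [NormedAddCommGroup A] [NormedSpace ℝ A] (n : ℕ) :
    ∀ {G : Type} [NormedAddCommGroup G] [NormedSpace ℝ G] (F : E → A → G)
    (_ : ContDiff ℝ ∞ (fun p : E × A => F p.1 p.2)),
    Continuous (fun p : E × A => ‖iteratedFDeriv ℝ n (fun x => F x p.2) p.1‖) := by
  induction n with
  | zero =>
    intro G _ _ F hF
    simpa using hF.continuous.norm
  | succ n ih =>
    intro G _ _ F hF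
    simp_rw [← norm_iteratedFDeriv_fderiv]
    apply ih (fun x a => fderiv ℝ (fun x => F x a) x)
    refine ContDiff.fderiv (m := ∞) (n := ∞) (f := fun (p : E × A) x => F x p.2) ?_ contDiff_fst
          (by simp)
    exact hF.comp (by fun_prop : ContDiff ℝ ∞ fun p : (E × A) × E => (p.2, p.1.2))

theorem contDiff_integral_unit {E : Type} [NormedAddCommGroup E] [NormedSpace ℝ E]
    [FiniteDimensional ℝ E] (F : E → ℝ → ℝ)
    (hF : ContDiff ℝ ∞ (fun p : E × ℝ => F p.1 p.2)) :
    ContDiff ℝ ∞ (fun x => ∫ θ in (0 : ℝ)..1, F x θ) := by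
  simp_rw [intervalIntegral.integral_of_le zero_le_one]
  apply contDiff_integral_param _ F hF
  intro n r
  have hc := iter_partial_cont n F hF
  have hK : IsCompact (Metric.closedBall (0 : E) r ×ˢ Icc (0 : ℝ) 1) :=
    (isCompact_closedBall _ _).prod isCompact_Icc
  obtain ⟨C, hC⟩ := hK.bddAbove_image hc.continuousOn
  refine ⟨fun _ => C, by simp, ?_⟩
  rw [ae_restrict_iff' measurableSet_Ioc]
  refine Eventually.of_forall fun a ha x hx => ?_
  exact hC ⟨(x, a), ⟨by simpa using hx.le, ⟨ha.1.le, ha.2⟩⟩, rfl⟩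

theorem hadamard {E : Type} [NormedAddCommGroup E] [NormedSpace ℝ E]
    [FiniteDimensional ℝ E] (g : E × ℝ → ℝ) (hg : ContDiff ℝ ∞ g) :
    ∃ q : E × ℝ → ℝ, ContDiff ℝ ∞ q ∧ ∀ x v, g (x, v) = g (x, 0) + v * q (x, v) := by
  let D : E → ℝ → ℝ := fun x v => deriv (fun v => g (x, v)) v
  have hD : ContDiff ℝ ∞ (fun p : E × ℝ => D p.1 p.2) := by
    have : (fun p : E × ℝ => D p.1 p.2) =
        fun p : E × ℝ => fderiv ℝ (fun v => g (p.1, v)) p.2 1 := by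
      ext p; simp [D]
    rw [this]
    refine ContDiff.clm_apply ?_ contDiff_const
    refine ContDiff.fderiv (m := ∞) (n := ∞) (f := fun (p : E × ℝ) v => g (p.1, v)) ?_ contDiff_snd
          (by simp)
    exact hg.comp (by fun_prop : ContDiff ℝ ∞ fun p : (E × ℝ) × ℝ => (p.1.1, p.2))
  refine ⟨fun p => ∫ θ in (0 : ℝ)..1, D p.1 (θ * p.2), ?_, ?_⟩
  · apply contDiff_integral_unit (fun (p : E × ℝ) θ => D p.1 (θ * p.2))
    exact hD.comp (by fun_prop : ContDiff ℝ ∞ fun p : (E × ℝ) × ℝ => (p.1.1, p.2 * p.1.2))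
  · intro x v
    have h1 : ∀ w, HasDerivAt (fun v => g (x, v)) (D x w) w := fun w => by
      have : ContDiff ℝ ∞ fun v => g (x, v) :=
        hg.comp (by fun_prop : ContDiff ℝ ∞ fun v : ℝ => (x, v))
      exact (this.differentiable (by simp) w).hasDerivAt
    have hDc : Continuous (D x) := hD.continuous.comp (by fun_prop : Continuous fun v : ℝ => (x, v))
    have h2 : ∀ θ ∈ uIcc (0 : ℝ) 1, HasDerivAt (fun θ => g (x, θ * v)) (D x (θ * v) * v) θ := by
      intro θ _
      have := (h1 (θ * v)).comp θ ((hasDerivAt_id θ).mul_const v)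
      simpa [Function.comp_def] using this
    have := intervalIntegral.integral_eq_sub_of_hasDerivAt h2
      (Continuous.intervalIntegrable (by fun_prop) _ _)
    rw [intervalIntegral.integral_mul_const] at this
    simp only [one_mul, zero_mul] at this
    simp only
    linarith


theorem exists_entire_cos :
    ∃ C : ℝ → ℝ, ContDiff ℝ ∞ C ∧ ∀ v, C (v ^ 2) = Real.cos v := by
  let c : ℕ → ℝ := fun n => (-1) ^ n / ((2 * n).factorial : ℝ)
  have hc0 : ∀ n, c n ≠ 0 := fun n => by
    simp only [c]; positivity
  have hr : (FormalMultilinearSeries.ofScalars ℝ c).radius = ⊤ := by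
    apply FormalMultilinearSeries.ofScalars_radius_eq_top_of_tendsto
    · exact Eventually.of_forall hc0
    · have hle : ∀ n : ℕ, ‖c n.succ‖ / ‖c n‖ ≤ 1 / ((n : ℝ) + 1) := by
        intro n
        simp only [c, norm_div, norm_pow, norm_neg, norm_one, one_pow, RCLike.norm_natCast]
        have : (2 * n.succ).factorial = (2 * n + 2) * ((2 * n + 1) * (2 * n).factorial) := by
          rw [show 2 * n.succ = 2 * n + 1 + 1 by omega, Nat.factorial_succ, Nat.factorial_succ]
        rw [this]
        have hpos : (0 : ℝ) < ((2 * n).factorial : ℝ) := by positivity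
        push_cast
        rw [div_div_eq_mul_div, div_mul_eq_mul_div, div_div, one_mul, div_le_div_iff₀ (by positivity) (by positivity)]
        have : (0:ℝ) ≤ n := by positivity
        have h2 : ((n : ℝ) + 1) ≤ (2 * n + 2) * (2 * n + 1) := by nlinarith
        have := mul_le_mul_of_nonneg_left h2 hpos.le
        nlinarith
      exact squeeze_zero (fun n => by positivity) hle tendsto_one_div_add_atTop_nhds_zero_nat
  refine ⟨(FormalMultilinearSeries.ofScalars ℝ c).sum, ?_, ?_⟩
  · have h := (FormalMultilinearSeries.ofScalars ℝ c).hasFPowerSeriesOnBall (by simp [hr])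
    rw [hr] at h
    have : AnalyticOnNhd ℝ (FormalMultilinearSeries.ofScalars ℝ c).sum univ := by
      have := h.analyticOnNhd
      rwa [Metric.eball_top] at this
    rw [← contDiffOn_univ]
    exact this.contDiffOn uniqueDiffOn_univ
  · intro v
    have := FormalMultilinearSeries.ofScalars_sum_eq (E := ℝ) c (v ^ 2)
    rw [FormalMultilinearSeries.ofScalarsSum] at this
    rw [this, Real.cos_eq_tsum]
    congr 1
    ext n
    simp only [c, smul_eq_mul, pow_mul]
    ring

theorem exists_tame_cos :
    ∃ Φ : ℝ → ℝ, ContDiff ℝ ∞ Φ ∧ (∀ v, Φ (v ^ 2) = Real.cos v) ∧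
      (∀ v, Real.sin v = - (2 * v * deriv Φ (v ^ 2))) ∧
      ∀ n : ℕ, ∃ B : ℝ, ∀ z, |iteratedDeriv n Φ z| ≤ B := by
  obtain ⟨C, hC, hCcos⟩ := exists_entire_cos
  let Φ : ℝ → ℝ := fun z => Real.smoothTransition (z + 1) * C z
  have hΦ : ContDiff ℝ ∞ Φ := by
    refine ContDiff.mul ?_ hC
    exact Real.smoothTransition.contDiff.comp (by fun_prop)
  have hcos : ∀ v, Φ (v ^ 2) = Real.cos v := by
    intro v
    simp only [Φ]
    rw [Real.smoothTransition.one_of_one_le (by nlinarith [sq_nonneg v]), one_mul, hCcos]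
  have hD : ∀ n z, HasDerivAt (iteratedDeriv n Φ) (iteratedDeriv (n + 1) Φ z) z := by
    intro n z
    have : ContDiff ℝ 1 (iteratedDeriv n Φ) := by
      rw [iteratedDeriv_eq_iterate]
      exact ContDiff.iterate_deriv' 1 n (hΦ.of_le (by exact_mod_cast le_top))
    rw [iteratedDeriv_succ]
    exact (this.differentiable (by norm_num) z).hasDerivAt
  have hd1 : ∀ v, iteratedDeriv 1 Φ (v ^ 2) * (2 * v) = - Real.sin v := by
    intro v
    have h0 := hD 0 (v ^ 2)
    rw [iteratedDeriv_zero] at h0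
    have h1 := HasDerivAt.comp (h := fun x : ℝ => x ^ 2) v h0 (hasDerivAt_pow 2 v)
    have h2 : (Φ ∘ fun x => x ^ 2) = Real.cos := funext hcos
    rw [h2] at h1
    have := h1.unique (Real.hasDerivAt_cos v)
    simpa using this
  have hd2 : ∀ z, 0 < z → 4 * z * iteratedDeriv 2 Φ z = - (2 * iteratedDeriv 1 Φ z + Φ z) := by
    intro z hz
    obtain ⟨v, rfl⟩ : ∃ v, z = v ^ 2 := ⟨√z, (Real.sq_sqrt hz.le).symm⟩
    have h1 := ((hD 1 (v ^ 2)).comp v ((hasDerivAt_pow 2 v))).mul ((hasDerivAt_id v).const_mul 2)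
    have h2 : ((iteratedDeriv 1 Φ ∘ fun x => x ^ 2) * fun y => 2 * id y) = fun v => - Real.sin v :=
      funext hd1
    rw [h2] at h1
    have := h1.unique (Real.hasDerivAt_sin v).neg
    simp at this
    rw [hcos, iteratedDeriv_one]
    linear_combination this
  have hrec : ∀ n : ℕ, ∀ z, 0 < z → 4 * z * iteratedDeriv (n + 2) Φ z =
      - ((4 * n + 2) * iteratedDeriv (n + 1) Φ z + iteratedDeriv n Φ z) := by
    intro n
    induction n with
    | zero => intro z hz; simpa using hd2 z hz
    | succ n ih =>
      intro z hz
      have h1 := (((hasDerivAt_id z).const_mul 4).mul (hD (n + 2) z))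
      have h2 := (((hD (n + 1) z).const_mul (4 * (n : ℝ) + 2)).add (hD n z)).neg
      have h3 : ((fun y => 4 * id y) * iteratedDeriv (n + 2) Φ) =ᶠ[𝓝 z]
        (-((fun y ↦ (4 * (n : ℝ) + 2) * iteratedDeriv (n + 1) Φ y) + iteratedDeriv n Φ)) := by
        filter_upwards [lt_mem_nhds hz] with y hy
        simpa using ih y hy
      have := (h1.congr_of_eventuallyEq h3.symm).unique h2
      simp at this
      push_cast
      linear_combination this
  have hbig : ∀ n : ℕ, ∃ B : ℝ, ∀ z, 1 ≤ z → |iteratedDeriv n Φ z| ≤ B := by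
    intro n
    induction n using Nat.twoStepInduction with
    | zero =>
      refine ⟨1, fun z hz => ?_⟩
      obtain ⟨v, rfl⟩ : ∃ v, z = v ^ 2 := ⟨√z, (Real.sq_sqrt (by linarith)).symm⟩
      rw [iteratedDeriv_zero, hcos]
      exact Real.abs_cos_le_one v
    | one =>
      refine ⟨1, fun z hz => ?_⟩
      obtain ⟨v, hv, rfl⟩ : ∃ v, 1 ≤ v ∧ z = v ^ 2 :=
        ⟨√z, by simpa using Real.sqrt_le_sqrt hz, (Real.sq_sqrt (by linarith)).symm⟩
      have h1 := congrArg abs (hd1 v)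
      rw [abs_mul, abs_neg, abs_of_nonneg (by linarith : 0 ≤ 2 * v)] at h1
      have h2 := Real.abs_sin_le_one v
      have h3 := abs_nonneg (iteratedDeriv 1 Φ (v ^ 2))
      nlinarith
    | more n ih0 ih1 =>
      obtain ⟨B0, h0⟩ := ih0
      obtain ⟨B1, h1⟩ := ih1
      refine ⟨(4 * n + 2) * B1 + B0, fun z hz => ?_⟩
      have h := congrArg abs (hrec n z (by linarith))
      rw [abs_neg, abs_mul, abs_of_nonneg (by linarith : 0 ≤ 4 * z)] at h
      have h2 := abs_add_le ((4 * (n : ℝ) + 2) * iteratedDeriv (n + 1) Φ z) (iteratedDeriv n Φ z)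
      rw [abs_mul, abs_of_nonneg (by positivity : 0 ≤ 4 * (n : ℝ) + 2)] at h2
      have h3 := abs_nonneg (iteratedDeriv (n + 2) Φ z)
      have h4 := mul_le_mul_of_nonneg_left (h1 z hz) (by positivity : 0 ≤ 4 * (n : ℝ) + 2)
      have h5 := h0 z hz
      nlinarith
  refine ⟨Φ, hΦ, hcos, ?_, ?_⟩
  · intro v
    have := hd1 v
    rw [iteratedDeriv_one] at this
    linarith
  · intro n
    obtain ⟨B1, hB1⟩ := hbig n
    have hcont : Continuous (iteratedDeriv n Φ) :=
      continuous_iff_continuousAt.2 fun z => (hD n z).continuousAt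
    obtain ⟨B2, hB2⟩ := (isCompact_Icc (a := (-1 : ℝ)) (b := 1)).exists_bound_of_continuousOn hcont.continuousOn
    refine ⟨max (max B1 B2) 0, fun z => ?_⟩
    rcases le_total 1 z with h | h
    · exact (hB1 z h).trans (by simp)
    · rcases le_or_gt (-1) z with h' | h'
      · exact (hB2 z ⟨h', h⟩).trans (by simp)
      · have : Φ =ᶠ[𝓝 z] fun _ => 0 := by
          filter_upwards [gt_mem_nhds h'] with y hy
          simp only [Φ]
          rw [Real.smoothTransition.zero_of_nonpos (by linarith), zero_mul]
        have := (this.iteratedDeriv_eq n)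
        rw [this]
        simp


def BddDerivs {E F : Type} [NormedAddCommGroup E] [NormedSpace ℝ E] [NormedAddCommGroup F]
    [NormedSpace ℝ F] (f : E → F) : Prop :=
  ContDiff ℝ ∞ f ∧ ∀ n : ℕ, ∃ B : ℝ, ∀ x, ‖iteratedFDeriv ℝ n f x‖ ≤ B

theorem norm_iteratedFDeriv_comp_clm_le {E F G : Type} [NormedAddCommGroup E] [NormedSpace ℝ E]
    [NormedAddCommGroup F] [NormedSpace ℝ F] [NormedAddCommGroup G] [NormedSpace ℝ G]
    (f : E → F) (hf : ContDiff ℝ ∞ f) (L : G →L[ℝ] E) (n : ℕ) (x : G) :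
    ‖iteratedFDeriv ℝ n (fun x => f (L x)) x‖ ≤ ‖iteratedFDeriv ℝ n f (L x)‖ * ‖L‖ ^ n := by
  have := L.iteratedFDeriv_comp_right hf x (i := n) (by exact_mod_cast le_top)
  rw [Function.comp_def] at this
  rw [this]
  refine (ContinuousMultilinearMap.norm_compContinuousLinearMap_le _ _).trans ?_
  simp

theorem BddDerivs.comp_clm {E F G : Type} [NormedAddCommGroup E] [NormedSpace ℝ E]
    [NormedAddCommGroup F] [NormedSpace ℝ F] [NormedAddCommGroup G] [NormedSpace ℝ G]
    {f : E → F} (hf : BddDerivs f) (L : G →L[ℝ] E) : BddDerivs (fun x => f (L x)) := by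
  refine ⟨hf.1.comp L.contDiff, fun n => ?_⟩
  obtain ⟨B, hB⟩ := hf.2 n
  refine ⟨B * ‖L‖ ^ n, fun x => (norm_iteratedFDeriv_comp_clm_le f hf.1 L n x).trans ?_⟩
  gcongr
  exact hB _

theorem BddDerivs.mul {E : Type} [NormedAddCommGroup E] [NormedSpace ℝ E]
    {f g : E → ℂ} (hf : BddDerivs f) (hg : BddDerivs g) : BddDerivs (fun x => f x * g x) := by
  refine ⟨hf.1.mul hg.1, fun n => ?_⟩
  choose B hB using hf.2
  choose B' hB' using hg.2
  refine ⟨∑ i ∈ Finset.range (n + 1), (n.choose i : ℝ) * B i * B' (n - i), fun x => ?_⟩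
  refine (norm_iteratedFDeriv_mul_le hf.1 hg.1 x (n := n) (by exact_mod_cast le_top)).trans ?_
  gcongr with i hi
  · exact mul_nonneg (by positivity) ((norm_nonneg _).trans (hB i x))
  · exact hB i x
  · exact hB' _ x

theorem BddDerivs.ofReal {f : ℝ → ℝ} (hf : ContDiff ℝ ∞ f)
    (hb : ∀ n : ℕ, ∃ B : ℝ, ∀ z, |iteratedDeriv n f z| ≤ B) :
    BddDerivs (fun x => (f x : ℂ)) := by
  refine ⟨Complex.ofRealCLM.contDiff.comp hf, fun n => ?_⟩
  obtain ⟨B, hB⟩ := hb n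
  refine ⟨B, fun x => ?_⟩
  have := Complex.ofRealLI.norm_iteratedFDeriv_comp_left (f := f) (x := x) hf.contDiffAt
    (i := n) (by exact_mod_cast le_top)
  change ‖iteratedFDeriv ℝ n (Complex.ofRealLI ∘ f) x‖ ≤ B
  rw [this, norm_iteratedFDeriv_eq_norm_iteratedDeriv]
  exact hB x

theorem BddDerivs.cexp : BddDerivs (fun a : ℝ => Complex.exp (a * Complex.I)) := by
  have hs : ContDiff ℝ ∞ (fun a : ℝ => Complex.exp (a * Complex.I)) := by
    have : ContDiff ℝ ∞ (fun a : ℝ => (a : ℂ)) := Complex.ofRealCLM.contDiff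
    fun_prop
  refine ⟨hs, fun n => ⟨1, fun x => ?_⟩⟩
  have h : ∀ n : ℕ, iteratedDeriv n (fun a : ℝ => Complex.exp (a * Complex.I)) =
      fun a : ℝ => Complex.I ^ n * Complex.exp (a * Complex.I) := by
    intro n
    induction n with
    | zero => simp
    | succ n ih =>
      rw [iteratedDeriv_succ, ih]
      ext a
      have h1 : HasDerivAt (fun a : ℝ => (a : ℂ) * Complex.I) (1 * Complex.I) a :=
        (Complex.ofRealCLM.hasDerivAt (x := a)).mul_const _
      have h2 := (h1.cexp).const_mul (Complex.I ^ n)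
      rw [h2.deriv]
      ring
  rw [norm_iteratedFDeriv_eq_norm_iteratedDeriv, h]
  simp [Complex.norm_exp_ofReal_mul_I]

theorem kernel_smooth (Θ : ℝ → ℝ) (hΘ : ContDiff ℝ ∞ Θ)
    (hb : ∀ n : ℕ, ∃ B : ℝ, ∀ z, |iteratedDeriv n Θ z| ≤ B)
    (χ : ℂ → ℂ) (hχ : ContDiff ℝ ∞ χ)
    (hintgr : ∀ k : ℕ, Integrable fun w => (1 + ‖w‖) ^ k * ‖χ w‖) :
    ContDiff ℝ ∞ (fun p : ℝ × ℝ => ∫ w : ℂ, χ w *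
      (Complex.exp ((w.re * p.1 : ℝ) * Complex.I) * (Θ (w.im ^ 2 * p.2) : ℂ))) := by
  let Ξ : ℝ × ℝ → ℂ := fun q => Complex.exp ((q.1 : ℝ) * Complex.I) * (Θ q.2 : ℂ)
  have hΞ : BddDerivs Ξ :=
    (BddDerivs.cexp.comp_clm (ContinuousLinearMap.fst ℝ ℝ ℝ)).mul
      ((BddDerivs.ofReal hΘ hb).comp_clm (ContinuousLinearMap.snd ℝ ℝ ℝ))
  let L : ℂ → (ℝ × ℝ →L[ℝ] ℝ × ℝ) := fun w =>
    (w.re • ContinuousLinearMap.fst ℝ ℝ ℝ).prod (w.im ^ 2 • ContinuousLinearMap.snd ℝ ℝ ℝ)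
  have hL : ∀ w, ‖L w‖ ≤ (1 + ‖w‖) ^ 2 := by
    intro w
    refine ContinuousLinearMap.opNorm_le_bound _ (by positivity) fun x => ?_
    have h1 := Complex.abs_re_le_norm w
    have h2 := Complex.abs_im_le_norm w
    have h0 := norm_nonneg w
    have h3 : |w.re| ≤ (1 + ‖w‖) ^ 2 := by nlinarith
    have h4 : w.im ^ 2 ≤ (1 + ‖w‖) ^ 2 := by
      rw [← sq_abs w.im]; have := abs_nonneg w.im; nlinarith
    have hx1 : |x.1| ≤ ‖x‖ := norm_fst_le x
    have hx2 : |x.2| ≤ ‖x‖ := norm_snd_le x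
    simp only [L, ContinuousLinearMap.prod_apply, smul_apply, Prod.norm_def,
      ContinuousLinearMap.coe_fst', ContinuousLinearMap.coe_snd', smul_eq_mul, norm_mul,
      Real.norm_eq_abs]
    apply max_le
    · exact mul_le_mul h3 hx1 (abs_nonneg _) (by positivity)
    · rw [abs_of_nonneg (sq_nonneg w.im)]
      exact mul_le_mul h4 hx2 (abs_nonneg _) (by positivity)
  change ContDiff ℝ ∞ (fun p : ℝ × ℝ => ∫ w : ℂ, χ w * Ξ (L w p))
  apply contDiff_integral_param volume (fun p w => χ w * Ξ (L w p))
  · have hre : ContDiff ℝ ∞ (fun w : ℂ => w.re) := Complex.reCLM.contDiff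
    have him : ContDiff ℝ ∞ (fun w : ℂ => w.im) := Complex.imCLM.contDiff
    refine (hχ.comp contDiff_snd).mul (hΞ.1.comp ?_)
    change ContDiff ℝ ∞ (fun p : (ℝ × ℝ) × ℂ => (p.2.re * p.1.1, p.2.im ^ 2 * p.1.2))
    have h1 := hre.comp (contDiff_snd (E := ℝ × ℝ) (F := ℂ))
    have h2 := him.comp (contDiff_snd (E := ℝ × ℝ) (F := ℂ))
    exact (h1.mul (by fun_prop)).prodMk ((h2.pow 2).mul (by fun_prop))
  · intro n r
    obtain ⟨B, hB⟩ := hΞ.2 n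
    refine ⟨fun w => B * ((1 + ‖w‖) ^ (2 * n) * ‖χ w‖), (hintgr _).const_mul _, ?_⟩
    refine Eventually.of_forall fun w x _ => ?_
    have hs : ContDiff ℝ ∞ fun x => Ξ (L w x) := hΞ.1.comp (L w).contDiff
    have h1 : iteratedFDeriv ℝ n (fun x => χ w * Ξ (L w x)) x =
        χ w • iteratedFDeriv ℝ n (fun x => Ξ (L w x)) x := by
      have := iteratedFDeriv_const_smul_apply (𝕜 := ℝ) (a := χ w) (i := n) (x := x)
        (f := fun x => Ξ (L w x)) (hs.contDiffAt.of_le (by exact_mod_cast le_top))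
      exact this
    rw [h1, norm_smul]
    have h2 := norm_iteratedFDeriv_comp_clm_le Ξ hΞ.1 (L w) n x
    have hB0 : 0 ≤ B := (norm_nonneg _).trans (hB (L w x))
    have h3 : ‖iteratedFDeriv ℝ n (fun x => Ξ (L w x)) x‖ ≤ B * (1 + ‖w‖) ^ (2 * n) := by
      refine h2.trans ?_
      rw [pow_mul]
      gcongr
      · exact hB _
      · exact hL w
    calc _ ≤ ‖χ w‖ * (B * (1 + ‖w‖) ^ (2 * n)) := by gcongr
      _ = _ := by ring

open scoped FourierTransform SchwartzMap in
theorem fold_division (g : ℝ × ℝ → ℝ) (hg : ContDiff ℝ ∞ g) (hc : HasCompactSupport g) :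
    ∃ P Q : ℝ × ℝ → ℝ, ContDiff ℝ ∞ P ∧ ContDiff ℝ ∞ Q ∧
      ∀ u v, g (u, v) = P (u, v ^ 2) + v * Q (u, v ^ 2) := by
  obtain ⟨Φ, hΦ, hcos, hsin, hbd⟩ := exists_tame_cos
  have hre : ContDiff ℝ ∞ (fun w : ℂ => w.re) := Complex.reCLM.contDiff
  have him : ContDiff ℝ ∞ (fun w : ℂ => w.im) := Complex.imCLM.contDiff
  -- rescale so that the Fourier kernel has no `2π`
  let G : ℂ → ℂ := fun z => (g (2 * Real.pi * z.re, 2 * Real.pi * z.im) : ℂ)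
  have hpi : (2 * Real.pi) ≠ 0 := by positivity
  have hG : ContDiff ℝ ∞ G := by
    have : ContDiff ℝ ∞ fun z : ℂ => (2 * Real.pi * z.re, 2 * Real.pi * z.im) := by fun_prop
    exact Complex.ofRealCLM.contDiff.comp (hg.comp this)
  have hGc : HasCompactSupport G := by
    have h1 : HasCompactSupport fun z : ℂ => g (2 * Real.pi * z.re, 2 * Real.pi * z.im) := by
      have := hc.comp_homeomorph
        (Complex.equivRealProdCLM.toHomeomorph.trans (Homeomorph.smulOfNeZero (2 * Real.pi) hpi))
      exact this
    exact h1.comp_left (g := fun x : ℝ => (x : ℂ)) (by simp)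
  let f : 𝓢(ℂ, ℂ) := hGc.toSchwartzMap hG
  let ψ : 𝓢(ℂ, ℂ) := 𝓕 f
  have hψ : 𝓕⁻ ψ = f := FourierTransform.fourierInv_fourier_eq f
  have hinv : ∀ u v : ℝ, (g (u, v) : ℂ) =
      ∫ w : ℂ, ψ w * (Complex.exp ((w.re * u : ℝ) * Complex.I) *
        Complex.exp ((w.im * v : ℝ) * Complex.I)) := by
    intro u v
    have h1 : (g (u, v) : ℂ) = f ⟨u / (2 * Real.pi), v / (2 * Real.pi)⟩ := by
      change _ = G _
      simp only [G]
      rw [mul_div_cancel₀ _ hpi, mul_div_cancel₀ _ hpi]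
    rw [h1, ← hψ, SchwartzMap.fourierInv_coe, Real.fourierInv_eq']
    congr 1
    ext w
    rw [smul_eq_mul, mul_comm, ← Complex.exp_add]
    congr 2
    rw [← add_mul]
    congr 1
    rw [← Complex.ofReal_add]
    congr 1
    rw [Complex.inner]
    simp
    field_simp
  have hintgr : ∀ k : ℕ, Integrable fun w => (1 + ‖w‖) ^ k * ‖ψ w‖ := by
    intro k
    have : (fun w => (1 + ‖w‖) ^ k * ‖ψ w‖) = fun w => ∑ m ∈ Finset.range (k + 1),
        (k.choose m : ℝ) * (‖w‖ ^ m * ‖ψ w‖) := by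
      ext w
      rw [add_comm, add_pow, Finset.sum_mul]
      refine Finset.sum_congr rfl fun i _ => ?_
      simp; ring
    rw [this]
    exact integrable_finsetSum _ fun i _ => (ψ.integrable_pow_mul volume i).const_mul _
  let χ : ℂ → ℂ := fun w => ((-2 * w.im : ℝ) * Complex.I) * ψ w
  have hχ : ContDiff ℝ ∞ χ := by
    refine ContDiff.mul ?_ (ψ.smooth ⊤)
    have : ContDiff ℝ ∞ fun w : ℂ => ((-2 * w.im : ℝ) : ℂ) :=
      Complex.ofRealCLM.contDiff.comp (contDiff_const.mul him)
    fun_prop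
  have hχint : ∀ k : ℕ, Integrable fun w => (1 + ‖w‖) ^ k * ‖χ w‖ := by
    intro k
    refine ((hintgr (k + 1)).const_mul 2).mono' ?_ ?_
    · have := hχ.continuous
      exact (by fun_prop : Continuous fun w => (1 + ‖w‖) ^ k * ‖χ w‖).aestronglyMeasurable
    · refine Eventually.of_forall fun w => ?_
      rw [Real.norm_of_nonneg (by positivity)]
      have h2 := Complex.abs_im_le_norm w
      have h3 : ‖χ w‖ ≤ 2 * (1 + ‖w‖) * ‖ψ w‖ := by
        simp only [χ, norm_mul, Complex.norm_real, Complex.norm_I, Real.norm_eq_abs, mul_one]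
        gcongr
        · simp
        · linarith
      calc _ ≤ (1 + ‖w‖) ^ k * (2 * (1 + ‖w‖) * ‖ψ w‖) := by gcongr
        _ = _ := by ring
  have hdΦ : ContDiff ℝ ∞ (deriv Φ) := by
    have := ContDiff.iterate_deriv 1 hΦ
    simpa using this
  have hbd' : ∀ n : ℕ, ∃ B : ℝ, ∀ z, |iteratedDeriv n (deriv Φ) z| ≤ B := by
    intro n
    obtain ⟨B, hB⟩ := hbd (n + 1)
    refine ⟨B, fun z => ?_⟩
    have := hB z
    rwa [iteratedDeriv_succ'] at this
  have hP := kernel_smooth Φ hΦ hbd ψ (ψ.smooth ⊤) hintgr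
  have hQ := kernel_smooth (deriv Φ) hdΦ hbd' χ hχ hχint
  refine ⟨_, _, Complex.reCLM.contDiff.comp hP, Complex.reCLM.contDiff.comp hQ, ?_⟩
  intro u v
  have hbound : ∀ (Θ : ℝ → ℝ) (χ : ℂ → ℂ), ContDiff ℝ ∞ Θ →
      (∀ n : ℕ, ∃ B : ℝ, ∀ z, |iteratedDeriv n Θ z| ≤ B) → ContDiff ℝ ∞ χ →
      (∀ k : ℕ, Integrable fun w => (1 + ‖w‖) ^ k * ‖χ w‖) →
      Integrable fun w : ℂ => χ w * (Complex.exp ((w.re * u : ℝ) * Complex.I) *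
        (Θ (w.im ^ 2 * v ^ 2) : ℂ)) := by
    intro Θ χ hΘ hb hχ hintgr
    obtain ⟨B, hB⟩ := hb 0
    refine ((hintgr 0).const_mul B).mono' ?_ ?_
    · have h1 := hχ.continuous
      have h2 := hΘ.continuous
      have h3 := hre.continuous
      have h4 := him.continuous
      exact (by fun_prop : Continuous fun w : ℂ => χ w * (Complex.exp ((w.re * u : ℝ) * Complex.I) *
        (Θ (w.im ^ 2 * v ^ 2) : ℂ))).aestronglyMeasurable
    · refine Eventually.of_forall fun w => ?_
      rw [norm_mul, norm_mul, Complex.norm_exp_ofReal_mul_I, one_mul, pow_zero, one_mul, mul_comm,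
        Complex.norm_real]
      gcongr
      simpa using hB (w.im ^ 2 * v ^ 2)
  have hI1 := hbound Φ ψ hΦ hbd (ψ.smooth ⊤) hintgr
  have hI2 := hbound (deriv Φ) χ hdΦ hbd' hχ hχint
  have key : (g (u, v) : ℂ) = (∫ w : ℂ, ψ w * (Complex.exp ((w.re * u : ℝ) * Complex.I) *
        (Φ (w.im ^ 2 * v ^ 2) : ℂ))) + v * ∫ w : ℂ, χ w * (Complex.exp ((w.re * u : ℝ) * Complex.I) *
        ((deriv Φ (w.im ^ 2 * v ^ 2) : ℝ) : ℂ)) := by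
    rw [hinv, ← integral_const_mul, ← integral_add hI1 (hI2.const_mul _)]
    congr 1
    ext w
    have h1 : Complex.exp ((w.im * v : ℝ) * Complex.I) = (Φ (w.im ^ 2 * v ^ 2) : ℂ) +
        (-(2 * (w.im * v) * deriv Φ (w.im ^ 2 * v ^ 2)) : ℝ) * Complex.I := by
      rw [Complex.exp_mul_I, ← Complex.ofReal_cos, ← Complex.ofReal_sin, ← hcos, hsin, mul_pow]
    rw [h1]
    simp only [χ]
    push_cast
    ring
  have := congrArg Complex.re key
  simpa using this



def LD {E F : Type} [NormedAddCommGroup E] [NormedSpace ℝ E]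
    [NormedAddCommGroup F] [NormedSpace ℝ F] (σ : E → F) (p : E) : Prop :=
  (∀ᶠ y in 𝓝 p, ContDiffAt ℝ ∞ σ y) ∧ ∃ L : E ≃L[ℝ] F, HasFDerivAt σ (L : E →L[ℝ] F) p

section LDsec

variable {E F G : Type} [NormedAddCommGroup E] [NormedSpace ℝ E]
    [NormedAddCommGroup F] [NormedSpace ℝ F] [NormedAddCommGroup G] [NormedSpace ℝ G]

theorem LD.of_injective [FiniteDimensional ℝ E] {σ : E → E} {p : E}
    (h : ∀ᶠ y in 𝓝 p, ContDiffAt ℝ ∞ σ y) (L : E →L[ℝ] E) (hL : HasFDerivAt σ L p)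
    (hinj : ∀ x, L x = 0 → x = 0) : LD σ p := by
  refine ⟨h, ?_⟩
  have hi : Function.Injective (L : E →ₗ[ℝ] E) :=
    (injective_iff_map_eq_zero (L : E →ₗ[ℝ] E)).2 hinj
  refine ⟨(LinearEquiv.ofInjectiveEndo _ hi).toContinuousLinearEquiv, ?_⟩
  convert hL
  ext x
  rfl

theorem LD.continuousAt {σ : E → F} {p : E} (h : LD σ p) : ContinuousAt σ p := by
  obtain ⟨_, L, hL⟩ := h
  exact hL.continuousAt

theorem LD.comp {σ : E → F} {τ : F → G} {p : E} (hτ : LD τ (σ p)) (hσ : LD σ p) :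
    LD (τ ∘ σ) p := by
  have hc := hσ.continuousAt
  obtain ⟨hs, L, hL⟩ := hσ
  obtain ⟨ht, M, hM⟩ := hτ
  refine ⟨?_, L.trans M, hM.comp p hL⟩
  filter_upwards [hs, hc.eventually ht] with y h1 h2
  exact h2.comp y h1

theorem LD.homeo [CompleteSpace E] {σ : E → F} {p : E} (h : LD σ p) :
    ∃ e : OpenPartialHomeomorph E F, p ∈ e.source ∧ (∀ x, e x = σ x) ∧
      (∀ x ∈ e.source, ContDiffAt ℝ ∞ σ x) ∧ ∀ y ∈ e.target, ContDiffAt ℝ ∞ e.symm y := by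
  obtain ⟨hs, L, hL⟩ := h
  have hp : ContDiffAt ℝ ∞ σ p := hs.self_of_nhds
  let e₀ := hp.toOpenPartialHomeomorph σ hL (by simp)
  have hpe : p ∈ e₀.source := hp.mem_toOpenPartialHomeomorph_source hL (by simp)
  have hcf : ContinuousAt (fderiv ℝ σ) p :=
    (hp.fderiv_right (m := 0) (by simp)).continuousAt
  have hinv : ∀ᶠ x in 𝓝 p, fderiv ℝ σ x ∈ range ((↑) : (E ≃L[ℝ] F) → E →L[ℝ] F) := by
    apply hcf.eventually
    rw [hL.fderiv]
    exact ContinuousLinearEquiv.nhds L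
  obtain ⟨s, hs', hso, hps⟩ := eventually_nhds_iff.1 (hs.and hinv)
  refine ⟨e₀.restrOpen s hso, by simp [hpe, hps], fun x => rfl, ?_, ?_⟩
  · intro x hx
    simp only [OpenPartialHomeomorph.restrOpen_source] at hx
    exact (hs' x hx.2).1
  · intro y hy
    have hx := (e₀.restrOpen s hso).map_target hy
    simp only [OpenPartialHomeomorph.restrOpen_source] at hx
    obtain ⟨hcd, L', hL'⟩ := hs' _ hx.2
    apply OpenPartialHomeomorph.contDiffAt_symm (f₀' := L') _ hy
    · rw [hL']
      exact (hcd.differentiableAt (by simp)).hasFDerivAt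
    · exact hcd

theorem LD.local_inverse [CompleteSpace E] {σ : E → F} {p : E} (h : LD σ p) :
    ∃ ρ : F → E, (∀ᶠ y in 𝓝 (σ p), ContDiffAt ℝ ∞ ρ y) ∧ ρ (σ p) = p ∧
      (∀ᶠ x in 𝓝 p, ρ (σ x) = x) ∧ ∀ᶠ y in 𝓝 (σ p), σ (ρ y) = y := by
  obtain ⟨e, hp, he, h1, h2⟩ := h.homeo
  have hm : σ p ∈ e.target := he p ▸ e.map_source hp
  refine ⟨e.symm, ?_, ?_, ?_, ?_⟩
  · filter_upwards [e.open_target.mem_nhds hm] with y hy using h2 y hy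
  · rw [← he]; exact e.left_inv hp
  · filter_upwards [e.open_source.mem_nhds hp] with x hx
    rw [← he]; exact e.left_inv hx
  · filter_upwards [e.open_target.mem_nhds hm] with y hy
    rw [← he]; exact e.right_inv hy

def GE (f : E → F) (p : E) (g : E → F) (q : E) : Prop :=
  ∃ (σ : E → E) (τ : F → F), LD σ p ∧ LD τ (f p) ∧ σ p = q ∧ τ (f p) = g q ∧
    ∀ᶠ x in 𝓝 p, τ (f x) = g (σ x)

theorem GE.trans {f g h : E → F} {p q r : E} (h1 : GE f p g q) (h2 : GE g q h r) :
    GE f p h r := by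
  obtain ⟨σ, τ, hσ, hτ, hp, hf, he⟩ := h1
  obtain ⟨σ', τ', hσ', hτ', hp', hf', he'⟩ := h2
  subst hp hp'
  refine ⟨σ' ∘ σ, τ' ∘ τ, hσ'.comp hσ, LD.comp (hf ▸ hτ') hτ, rfl, ?_, ?_⟩
  · simp [hf, hf']
  · filter_upwards [he, hσ.continuousAt.eventually he'] with x hx hx'
    simp [hx, hx']

theorem SmoothDiffeoOn.of_homeo {σ : E → F} (e : OpenPartialHomeomorph E F) (he : ∀ x, e x = σ x)
    (h1 : ∀ x ∈ e.source, ContDiffAt ℝ ∞ σ x) (h2 : ∀ y ∈ e.target, ContDiffAt ℝ ∞ e.symm y)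
    (U : Set E) (hU : IsOpen U) (hUe : U ⊆ e.source) : SmoothDiffeoOn σ U := by
  have himg : σ '' U = e '' U := image_congr fun x _ => (he x).symm
  refine ⟨hU, ?_, fun x hx => (h1 x (hUe hx)).contDiffWithinAt, e.symm, ?_, ?_⟩
  · rw [himg]
    exact e.isOpen_image_of_subset_source hU hUe
  · rintro y ⟨x, hx, rfl⟩
    refine (h2 _ ?_).contDiffWithinAt
    rw [← he]; exact e.map_source (hUe hx)
  · intro x hx
    rw [← he]; exact e.left_inv (hUe hx)

theorem GE.germ [CompleteSpace E] [CompleteSpace F] {f g : E → F} {p q : E} (hf : ContinuousAt f p)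
    (h : GE f p g q) : GermDiffeomorphic f p g q := by
  obtain ⟨σ, τ, hσ, hτ, hp, hfg, he⟩ := h
  obtain ⟨e, hpe, hee, he1, he2⟩ := hσ.homeo
  obtain ⟨d, hpd, hdd, hd1, hd2⟩ := hτ.homeo
  have hV := hf.eventually (d.open_source.mem_nhds hpd)
  obtain ⟨s, hs, hso, hps⟩ := eventually_nhds_iff.1 (hV.and he)
  refine ⟨e.source ∩ s, d.source, σ, τ, ?_, ?_, ⟨hpe, hps⟩, hpd, hp, hfg, ?_, ?_⟩
  · exact SmoothDiffeoOn.of_homeo e hee he1 he2 _ (e.open_source.inter hso) inter_subset_left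
  · exact SmoothDiffeoOn.of_homeo d hdd hd1 hd2 _ d.open_source subset_rfl
  · exact fun x hx => (hs x hx.2).1
  · exact fun x hx => (hs x hx.2).2

end LDsec

theorem LD.of_prod {f g : ℝ × ℝ → ℝ} {p : ℝ × ℝ} (hf : ∀ᶠ y in 𝓝 p, ContDiffAt ℝ ∞ f y)
    (hg : ∀ᶠ y in 𝓝 p, ContDiffAt ℝ ∞ g y) {L M : ℝ × ℝ →L[ℝ] ℝ} (hL : HasFDerivAt f L p)
    (hM : HasFDerivAt g M p) (hinj : ∀ a b, L (a, b) = 0 → M (a, b) = 0 → a = 0 ∧ b = 0) :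
    LD (fun x => (f x, g x)) p := by
  refine LD.of_injective ?_ (L.prod M) (hL.prodMk hM) ?_
  · filter_upwards [hf, hg] with y h1 h2 using h1.prodMk h2
  · rintro ⟨a, b⟩ h
    simp only [ContinuousLinearMap.prod_apply, Prod.mk_eq_zero] at h
    simpa using hinj a b h.1 h.2

theorem LD.of_pi3 {f g h : (Fin 3 → ℝ) → ℝ} {p : Fin 3 → ℝ}
    (hf : ∀ᶠ y in 𝓝 p, ContDiffAt ℝ ∞ f y)
    (hg : ∀ᶠ y in 𝓝 p, ContDiffAt ℝ ∞ g y) (hh : ∀ᶠ y in 𝓝 p, ContDiffAt ℝ ∞ h y)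
    {L M N : (Fin 3 → ℝ) →L[ℝ] ℝ} (hL : HasFDerivAt f L p)
    (hM : HasFDerivAt g M p) (hN : HasFDerivAt h N p)
    (hinj : ∀ x, L x = 0 → M x = 0 → N x = 0 → x 0 = 0 ∧ x 1 = 0 ∧ x 2 = 0) :
    LD (fun x => ![f x, g x, h x]) p := by
  refine LD.of_injective ?_ (ContinuousLinearMap.pi ![L, M, N]) ?_ ?_
  · filter_upwards [hf, hg, hh] with y h1 h2 h3
    rw [contDiffAt_pi]
    intro i
    fin_cases i
    · exact h1
    · exact h2
    · exact h3
  · rw [hasFDerivAt_pi']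
    intro i
    fin_cases i
    · exact hL
    · exact hM
    · exact hN
  · intro x hx
    have := hinj x (congrFun hx 0) (congrFun hx 1) (congrFun hx 2)
    ext i; fin_cases i <;> simp [this]

theorem hasFDerivAt_coord (p : Fin 3 → ℝ) (i : Fin 3) : HasFDerivAt (fun X : Fin 3 → ℝ => X i)
    (ContinuousLinearMap.proj i : (Fin 3 → ℝ) →L[ℝ] ℝ) p :=
  (ContinuousLinearMap.proj i : (Fin 3 → ℝ) →L[ℝ] ℝ).hasFDerivAt

/-- the normal form of the cuspidal cross cap -/
def crossCap : ℝ × ℝ → Fin 3 → ℝ := fun p => ![p.1, p.2 ^ 2, p.1 * p.2 ^ 3]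

theorem crossCap_to_umbrella : GE crossCap ((0 : ℝ), (0 : ℝ))
      (fun p : ℝ × ℝ =>
        ![p.1 + p.2, p.1 ^ 2 + 2 * p.2 * p.1, p.1 ^ 4 + 4 * p.2 * p.1 ^ 3])
      ((0 : ℝ), (0 : ℝ)) := by
  refine ⟨fun p => (p.1 - p.2, p.2), fun X => ![X 0, X 0 ^ 2 - X 1,
    X 0 ^ 4 - 6 * X 0 ^ 2 * X 1 + 8 * X 2 - 3 * X 1 ^ 2], ?_, ?_, by simp, ?_, ?_⟩
  · refine LD.of_prod (Eventually.of_forall fun y => by fun_prop)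
      (Eventually.of_forall fun y => by fun_prop) (hasFDerivAt_fst.sub hasFDerivAt_snd)
      hasFDerivAt_snd ?_
    intro a b h1 h2
    simp at h1 h2
    constructor <;> linarith
  · have h0 : crossCap ((0 : ℝ), (0 : ℝ)) = 0 := by
      ext i; fin_cases i <;> simp [crossCap]
    rw [h0]
    have hp := hasFDerivAt_coord 0
    refine LD.of_pi3 (Eventually.of_forall fun y => by fun_prop)
      (Eventually.of_forall fun y => by fun_prop) (Eventually.of_forall fun y => by fun_prop)
      (hp 0) (((hp 0).pow 2).sub (hp 1)) ((((hp 0).pow 4).sub ((((hp 0).pow 2).const_mul 6).mul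
        (hp 1))).add ((hp 2).const_mul 8) |>.sub (((hp 1).pow 2).const_mul 3)) ?_
    intro x h0 h1 h2
    simp at h0 h1 h2
    exact ⟨h0, h1, h2⟩
  · ext i; fin_cases i <;> simp [crossCap]
  · refine Eventually.of_forall fun p => ?_
    ext i; fin_cases i <;> simp [crossCap] <;> ring


theorem hasDerivAt_mul_cont {n w : ℝ → ℝ} {n' x : ℝ} (hn : HasDerivAt n n' x) (h0 : n x = 0)
    (hw : ContinuousAt w x) : HasDerivAt (fun u => n u * w u) (n' * w x) x := by
  rw [hasDerivAt_iff_tendsto_slope] at hn ⊢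
  have := hn.mul (hw.tendsto.mono_left nhdsWithin_le_nhds : Tendsto w (𝓝[≠] x) (𝓝 (w x)))
  refine this.congr fun y => ?_
  simp [slope, h0, mul_assoc]

theorem smooth_deriv {f : ℝ → ℝ} (hf : ContDiff ℝ ∞ f) : ContDiff ℝ ∞ (deriv f) := by
  simpa using ContDiff.iterate_deriv 1 hf

theorem smooth_hasDerivAt {f : ℝ → ℝ} (hf : ContDiff ℝ ∞ f) (x : ℝ) :
    HasDerivAt f (deriv f x) x := (hf.differentiable (by simp) x).hasDerivAt

theorem smooth_slice {f : ℝ × ℝ → ℝ} (hf : ContDiff ℝ ∞ f) (x : ℝ) :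
    ContDiff ℝ ∞ (fun y => f (x, y)) := hf.comp (by fun_prop)

theorem oneD (p r B : ℝ → ℝ) (hp : ContDiff ℝ ∞ p) (hr : ContDiff ℝ ∞ r) (B' : ℝ)
    (h : ∀ᶠ v in 𝓝 (0 : ℝ), HasDerivAt (fun v => p (v ^ 2) + v ^ 3 * r (v ^ 2)) (-2 * v * B v) v)
    (hB : HasDerivAt B B' 0) : 3 * r 0 = -2 * B' := by
  let A : ℝ → ℝ := fun v => 2 * deriv p (v ^ 2) + v * (3 * r (v ^ 2) + 2 * v ^ 2 * deriv r (v ^ 2))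
  have hsq : ∀ v : ℝ, HasDerivAt (fun v : ℝ => v ^ 2) (2 * v) v := fun v => by
    simpa using hasDerivAt_pow 2 v
  have hcomp : ∀ f : ℝ → ℝ, ContDiff ℝ ∞ f → ∀ v : ℝ,
      HasDerivAt (fun v => f (v ^ 2)) (deriv f (v ^ 2) * (2 * v)) v := fun f hf v =>
    HasDerivAt.comp (h := fun x : ℝ => x ^ 2) v (smooth_hasDerivAt hf (v ^ 2)) (hsq v)
  have hd : ∀ v, HasDerivAt (fun v => p (v ^ 2) + v ^ 3 * r (v ^ 2)) (v * A v) v := by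
    intro v
    have := (hcomp p hp v).add ((hasDerivAt_pow 3 v).mul (hcomp r hr v))
    refine this.congr_deriv ?_
    simp only [A]
    push_cast
    ring
  have hAd : HasDerivAt A (3 * r 0) 0 := by
    have c1 := hp.continuous
    have c2 := hr.continuous
    have c3 := (smooth_deriv hr).continuous
    have h2 := hasDerivAt_mul_cont (hasDerivAt_id (0 : ℝ)) rfl
      (by fun_prop : Continuous fun v : ℝ => 3 * r (v ^ 2) + 2 * v ^ 2 * deriv r (v ^ 2)).continuousAt
    have := ((hcomp _ (smooth_deriv hp) 0).const_mul 2).add h2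
    refine this.congr_deriv ?_
    simp
  have hne : A =ᶠ[𝓝[≠] 0] fun v => -2 * B v := by
    filter_upwards [h.filter_mono nhdsWithin_le_nhds, self_mem_nhdsWithin] with v hv hv0
    have := (hd v).unique hv
    have hv0' : v ≠ 0 := hv0
    apply mul_left_cancel₀ hv0'
    linarith
  have h0 : A 0 = -2 * B 0 := by
    have t1 : Tendsto A (𝓝[≠] 0) (𝓝 (A 0)) := hAd.continuousAt.tendsto.mono_left nhdsWithin_le_nhds
    have t2 : Tendsto (fun v => -2 * B v) (𝓝[≠] 0) (𝓝 (-2 * B 0)) :=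
      ((hB.const_mul (-2)).continuousAt.tendsto.mono_left nhdsWithin_le_nhds)
    exact tendsto_nhds_unique (t1.congr' hne) t2
  have heq : A =ᶠ[𝓝 0] fun v => -2 * B v := by
    exact eventuallyEq_nhds_of_eventuallyEq_nhdsNE hne h0
  exact (hAd.congr_of_eventuallyEq heq.symm).unique (hB.const_mul (-2))

/-- Second order Taylor quotient. -/
theorem taylor_two (a : ℝ → ℝ) (ha : ContDiff ℝ ∞ a) :
    ∃ h : ℝ × ℝ → ℝ, ContDiff ℝ ∞ h ∧
      (∀ T S, a (T + S) - a T - S * deriv a T = S ^ 2 * h (T, S)) ∧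
      2 * h (0, 0) = deriv (deriv a) 0 := by
  have ha' := smooth_deriv ha
  have hk : ContDiff ℝ ∞ fun p : ℝ × ℝ => a (p.1 + p.2) - a p.1 - p.2 * deriv a p.1 := by fun_prop
  obtain ⟨q, hq, hkq⟩ := hadamard _ hk
  obtain ⟨h, hh, hqh⟩ := hadamard q hq
  simp only [add_zero, sub_self, zero_mul, zero_add] at hkq
  have hkd : ∀ T S, HasDerivAt (fun S => a (T + S) - a T - S * deriv a T)
      (deriv a (T + S) - deriv a T) S := by
    intro T S
    have h1 : HasDerivAt (fun S => a (T + S)) (deriv a (T + S)) S :=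
      (smooth_hasDerivAt ha (T + S)).comp_const_add T S
    have := (h1.sub_const (a T)).sub ((hasDerivAt_id S).mul_const (deriv a T))
    refine this.congr_deriv ?_
    simp
  have hq0 : ∀ T, q (T, 0) = 0 := by
    intro T
    have h1 := hkd T 0
    rw [show (fun S => a (T + S) - a T - S * deriv a T) = fun S => S * q (T, S) from
      funext fun S => hkq T S] at h1
    have h2 := hasDerivAt_mul_cont (hasDerivAt_id (0 : ℝ)) rfl
      (smooth_slice hq T).continuous.continuousAt
    have := h1.unique h2
    simpa using this.symm
  have hfin : ∀ T S, a (T + S) - a T - S * deriv a T = S ^ 2 * h (T, S) := by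
    intro T S
    rw [hkq T S, hqh T S, hq0]; ring
  refine ⟨h, hh, hfin, ?_⟩
  have hs := smooth_slice hh 0
  have h1 : ∀ S, deriv a S - deriv a 0 =
      S * (2 * h (0, S) + S * deriv (fun S => h (0, S)) S) := by
    intro S
    have e1 := hkd 0 S
    rw [show (fun S => a (0 + S) - a 0 - S * deriv a 0) = fun S => S ^ 2 * h (0, S) from
      funext fun S => hfin 0 S] at e1
    have e2 := (hasDerivAt_pow 2 S).mul (smooth_hasDerivAt hs S)
    have := e1.unique e2
    simp only [zero_add] at this
    rw [this]; push_cast; ring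
  have c1 := hs.continuous
  have c2 := (smooth_deriv hs).continuous
  have e1 := hasDerivAt_mul_cont (hasDerivAt_id (0 : ℝ)) rfl
    (by fun_prop : Continuous fun S =>
      2 * h (0, S) + S * deriv (fun S => h (0, S)) S).continuousAt
  have e2 := (smooth_hasDerivAt ha' 0).sub_const (deriv a 0)
  rw [show (fun S => deriv a S - deriv a 0) = _ from funext h1] at e2
  have := e1.unique e2
  simpa using this

theorem slice_lemma (a b : ℝ → ℝ) (ha : ContDiff ℝ ∞ a) (hb : ContDiff ℝ ∞ b)
    (h : ℝ × ℝ → ℝ) (hh : ContDiff ℝ ∞ h)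
    (htay : ∀ T S, a (T + S) - a T - S * deriv a T = S ^ 2 * h (T, S))
    (u : ℝ) (s p q r : ℝ → ℝ) (hp : ContDiff ℝ ∞ p) (hq : ContDiff ℝ ∞ q) (hr : ContDiff ℝ ∞ r)
    (hqr : ∀ y, q y = q 0 + y * r y)
    (hs : ∀ᶠ v in 𝓝 (0 : ℝ), DifferentiableAt ℝ s v ∧ s v * √(h (u - s v, s v)) = v ∧
      0 < h (u - s v, s v) ∧ deriv (deriv a) (u - s v) ≠ 0 ∧
      b (u - s v) + s v * deriv b (u - s v) = p (v ^ 2) + v * q (v ^ 2)) :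
    q 0 = 0 ∧ 3 * r 0 = 2 * ((deriv (deriv (deriv b)) u * deriv (deriv a) u -
      deriv (deriv b) u * deriv (deriv (deriv a)) u) / (deriv (deriv a) u) ^ 2) *
      (√(h (u, 0)))⁻¹ := by
  have ha' := smooth_deriv ha
  have hb' := smooth_deriv hb
  have ha2 := smooth_deriv ha'
  have hb2 := smooth_deriv hb'
  set c : ℝ → ℝ := fun x => deriv (deriv b) x / deriv (deriv a) x with hc
  -- the derivative of the height function
  have hder : ∀ᶠ v in 𝓝 (0 : ℝ), HasDerivAt (fun v => p (v ^ 2) + v * q (v ^ 2))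
      (-2 * v * c (u - s v)) v := by
    filter_upwards [hs.eventually_nhds] with v hv
    obtain ⟨hsd, -, -, ha0, -⟩ := hv.self_of_nhds
    have hsd := hsd.hasDerivAt
    have hus : HasDerivAt (fun v => u - s v) (-(deriv s v)) v := hsd.const_sub u
    have hcomp : ∀ f : ℝ → ℝ, ContDiff ℝ ∞ f →
        HasDerivAt (fun v => f (u - s v)) (deriv f (u - s v) * (-(deriv s v))) v :=
      fun f hf => HasDerivAt.comp (h := fun v => u - s v) v (smooth_hasDerivAt hf _) hus
    have e1 : (fun v => v ^ 2) =ᶠ[𝓝 v]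
        fun v => a u - a (u - s v) - s v * deriv a (u - s v) := by
      filter_upwards [hv] with w hw
      obtain ⟨-, h1, h2, -, -⟩ := hw
      have := htay (u - s w) (s w)
      rw [sub_add_cancel] at this
      rw [this]
      nth_rewrite 1 [← h1]
      rw [mul_pow, Real.sq_sqrt h2.le]
    have d1 : HasDerivAt (fun v => a u - a (u - s v) - s v * deriv a (u - s v))
        (s v * deriv (deriv a) (u - s v) * deriv s v) v := by
      refine (((hcomp a ha).const_sub (a u)).sub (hsd.mul (hcomp _ ha'))).congr_deriv ?_
      ring
    have d2 : HasDerivAt (fun v : ℝ => v ^ 2) (2 * v) v := by simpa using hasDerivAt_pow 2 v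
    have k1 := d2.unique (d1.congr_of_eventuallyEq e1)
    have d3 : HasDerivAt (fun v => b (u - s v) + s v * deriv b (u - s v))
        (-(s v * deriv (deriv b) (u - s v) * deriv s v)) v := by
      refine ((hcomp b hb).add (hsd.mul (hcomp _ hb'))).congr_deriv ?_
      ring
    have e2 : (fun v => p (v ^ 2) + v * q (v ^ 2)) =ᶠ[𝓝 v]
        fun v => b (u - s v) + s v * deriv b (u - s v) := by
      filter_upwards [hv] with w hw
      exact hw.2.2.2.2.symm
    refine (d3.congr_of_eventuallyEq e2).congr_deriv ?_
    simp only [hc]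
    have : -2 * v * (deriv (deriv b) (u - s v) / deriv (deriv a) (u - s v)) =
      -(2 * v) * (deriv (deriv b) (u - s v) / deriv (deriv a) (u - s v)) := by ring
    rw [this, k1]
    field_simp
  have hq0 : q 0 = 0 := by
    have d1 := hder.self_of_nhds
    have hsq : HasDerivAt (fun v : ℝ => v ^ 2) (2 * 0) (0 : ℝ) := by
      simpa using hasDerivAt_pow 2 (0 : ℝ)
    have d2 : HasDerivAt (fun v : ℝ => p (v ^ 2)) (deriv p (0 ^ 2) * (2 * 0)) 0 :=
      HasDerivAt.comp (h := fun x : ℝ => x ^ 2) 0 (smooth_hasDerivAt hp _) hsq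
    have cq := hq.continuous
    have d3 := hasDerivAt_mul_cont (hasDerivAt_id (0 : ℝ)) rfl
      (by fun_prop : Continuous fun v : ℝ => q (v ^ 2)).continuousAt
    have := d1.unique (d2.add d3)
    simpa using this.symm
  refine ⟨hq0, ?_⟩
  obtain ⟨hsd0, h1, h2, h3, -⟩ := hs.self_of_nhds
  have hs0 : s 0 = 0 := by
    rcases mul_eq_zero.1 h1 with h | h
    · exact h
    · exact absurd h (Real.sqrt_pos.2 h2).ne'
  rw [hs0, sub_zero] at h2 h3
  have hsc := hsd0.continuousAt
  have hsder : HasDerivAt s (√(h (u, 0)))⁻¹ 0 := by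
    have hcont : ContinuousAt (fun v => (√(h (u - s v, s v)))⁻¹) 0 := by
      have ch := hh.continuous
      apply ContinuousAt.inv₀
      · have : ContinuousAt (fun v => (u - s v, s v)) 0 := by fun_prop
        have h5 : ContinuousAt (fun v => h (u - s v, s v)) 0 := ContinuousAt.comp
          (g := h) (f := fun v => (u - s v, s v)) ch.continuousAt this
        exact h5.sqrt
      · rw [hs0, sub_zero]
        exact (Real.sqrt_pos.2 h2).ne'
    have := hasDerivAt_mul_cont (hasDerivAt_id (0 : ℝ)) rfl hcont
    have h5 := this.congr_of_eventuallyEq (f₁ := s) (by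
      filter_upwards [hs] with v hv
      have hpos := Real.sqrt_pos.2 hv.2.2.1
      have := hv.2.1
      simp only [id]
      rw [eq_mul_inv_iff_mul_eq₀ hpos.ne']
      exact this)
    simpa [hs0] using h5
  have hcd : HasDerivAt c ((deriv (deriv (deriv b)) u * deriv (deriv a) u -
      deriv (deriv b) u * deriv (deriv (deriv a)) u) / (deriv (deriv a) u) ^ 2) u :=
    (smooth_hasDerivAt hb2 u).div (smooth_hasDerivAt ha2 u) h3
  have hB : HasDerivAt (fun v => c (u - s v)) (((deriv (deriv (deriv b)) u * deriv (deriv a) u -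
      deriv (deriv b) u * deriv (deriv (deriv a)) u) / (deriv (deriv a) u) ^ 2) *
      (-(√(h (u, 0)))⁻¹)) 0 := by
    refine HasDerivAt.comp (h₂ := c) (h := fun v => u - s v) 0 ?_ (hsder.const_sub u)
    simpa [hs0] using hcd
  have := oneD p r _ hp hr _ (by
    filter_upwards [hder] with v hv
    refine hv.congr_of_eventuallyEq (Eventually.of_forall fun w => ?_)
    simp only
    rw [hqr (w ^ 2), hq0]; ring) hB
  rw [this]; ring

theorem graph_to_crossCap (a b : ℝ → ℝ) (ha : ContDiff ℝ ∞ a) (hb : ContDiff ℝ ∞ b)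
    (ha0 : a 0 = 0) (hb0 : b 0 = 0)
    (hpos : 0 < deriv (deriv a) 0) (hb2 : deriv (deriv b) 0 = 0)
    (hb3 : deriv (deriv (deriv b)) 0 = 0) (hb4 : deriv (deriv (deriv (deriv b))) 0 ≠ 0) :
    GE (fun p : ℝ × ℝ => ![p.1 + p.2, a p.1 + p.2 * deriv a p.1, b p.1 + p.2 * deriv b p.1])
      ((0 : ℝ), (0 : ℝ)) crossCap ((0 : ℝ), (0 : ℝ)) := by
  have sa1 := smooth_deriv ha
  have sb1 := smooth_deriv hb
  have sa2 := smooth_deriv sa1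
  have sb2 := smooth_deriv sb1
  have sa3 := smooth_deriv sa2
  have sb3 := smooth_deriv sb2
  obtain ⟨h, hh, htay, hh0⟩ := taylor_two a ha
  have hh0pos : 0 < h (0, 0) := by linarith
  have hev : ∀ᶠ x : ℝ × ℝ in 𝓝 (0, 0), 0 < h x :=
    hh.continuous.continuousAt.eventually (lt_mem_nhds hh0pos)
  set V : ℝ × ℝ → ℝ := fun p => p.2 * √(h p) with hV
  have hVs : ∀ᶠ x : ℝ × ℝ in 𝓝 (0, 0), ContDiffAt ℝ ∞ V x := by
    filter_upwards [hev] with x hx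
    exact contDiffAt_snd.mul (hh.contDiffAt.sqrt hx.ne')
  have hVd : HasFDerivAt V (√(h (0, 0)) • ContinuousLinearMap.snd ℝ ℝ ℝ) (0, 0) := by
    have hw : DifferentiableAt ℝ (fun p : ℝ × ℝ => √(h p)) (0, 0) :=
      (hh.contDiffAt.sqrt hh0pos.ne').differentiableAt (by simp)
    refine (hasFDerivAt_snd.mul hw.hasFDerivAt).congr_fderiv ?_
    simp
  have hΦ : LD (fun x : ℝ × ℝ => (x.1 + x.2, V x)) (0, 0) := by
    refine LD.of_prod (Eventually.of_forall fun y => by fun_prop) hVs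
      (hasFDerivAt_fst.add hasFDerivAt_snd) hVd ?_
    intro x y h1 h2
    have : √(h (0, 0)) ≠ 0 := (Real.sqrt_pos.2 hh0pos).ne'
    simp [this] at h1 h2
    constructor <;> linarith
  have hΦ0 : (fun x : ℝ × ℝ => (x.1 + x.2, V x)) (0, 0) = (0, 0) := by simp [hV]
  obtain ⟨ρ, hρs, hρ0, hρl, hρr⟩ := hΦ.local_inverse
  have hΦ1 : (((0 : ℝ), (0 : ℝ)).1 + ((0 : ℝ), (0 : ℝ)).2, V (0, 0)) = ((0 : ℝ), (0 : ℝ)) := hΦ0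
  rw [hΦ1] at hρs hρ0 hρr
  set Z0 : ℝ × ℝ → ℝ := fun p => b p.1 + p.2 * deriv b p.1 with hZ0
  have hZ0s : ContDiff ℝ ∞ Z0 := by fun_prop
  obtain ⟨Z, hZs, hZc, hZe⟩ := cut_off (Z0 ∘ ρ) (0, 0) (by
    filter_upwards [hρs] with x hx
    exact hZ0s.contDiffAt.comp x hx)
  obtain ⟨P, Q, hP, hQ, hPQ⟩ := fold_division Z hZs hZc
  obtain ⟨R, hR, hQR⟩ := hadamard Q hQ
  have hρc : ContinuousAt ρ (0, 0) := hρs.self_of_nhds.continuousAt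
  have hevρ : ∀ᶠ x : ℝ × ℝ in 𝓝 (0, 0), 0 < h (ρ x) := by
    apply hρc.eventually (p := fun y => 0 < h y)
    rw [hρ0]; exact hev
  have hevρ2 : ∀ᶠ x : ℝ × ℝ in 𝓝 (0, 0), deriv (deriv a) (ρ x).1 ≠ 0 := by
    apply hρc.eventually (p := fun y => deriv (deriv a) y.1 ≠ 0)
    rw [hρ0]
    have : ContinuousAt (fun y : ℝ × ℝ => deriv (deriv a) y.1) (0, 0) := by
      have := sa2.continuous
      fun_prop
    exact this.eventually_ne hpos.ne'
  have key : ∀ᶠ u in 𝓝 (0 : ℝ), Q (u, 0) = 0 ∧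
      3 * R (u, 0) = 2 * ((deriv (deriv (deriv b)) u * deriv (deriv a) u -
      deriv (deriv b) u * deriv (deriv (deriv a)) u) / (deriv (deriv a) u) ^ 2) *
      (√(h (u, 0)))⁻¹ := by
    have hall := ((hZe.and hρr).and (hρs.and (hevρ.and hevρ2)))
    filter_upwards [hall.curry_nhds] with u hu
    refine slice_lemma a b ha hb h hh htay u (fun v => (ρ (u, v)).2) (fun y => P (u, y))
      (fun y => Q (u, y)) (fun y => R (u, y)) (smooth_slice hP u) (smooth_slice hQ u)
      (smooth_slice hR u) (fun y => hQR u y) ?_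
    filter_upwards [hu] with v hv
    obtain ⟨⟨h1, h2⟩, h3, h4, h5⟩ := hv
    have h21 : (ρ (u, v)).1 + (ρ (u, v)).2 = u := congrArg Prod.fst h2
    have h22 : V (ρ (u, v)) = v := congrArg Prod.snd h2
    have hρ1 : u - (ρ (u, v)).2 = (ρ (u, v)).1 := by linarith
    rw [hρ1]
    refine ⟨?_, h22, h4, h5, ?_⟩
    · have hd : DifferentiableAt ℝ ρ (u, v) := h3.differentiableAt (by simp)
      have hd2 : DifferentiableAt ℝ (fun v : ℝ => (u, v)) v := by fun_prop
      exact (DifferentiableAt.comp (g := ρ) v hd hd2).snd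
    · rw [← hPQ, h1]; rfl
  -- the first derivative of `R` along the axis
  have hR0 : R (0, 0) = 0 := by
    have := key.self_of_nhds.2
    rw [hb3, hb2] at this
    simpa using this
  have hRd : HasDerivAt (fun u => R (u, 0)) (2 / 3 * (deriv (deriv (deriv (deriv b))) 0 *
      deriv (deriv a) 0) * (((deriv (deriv a) 0) ^ 2)⁻¹ * (√(h (0, 0)))⁻¹)) 0 := by
    have hn : HasDerivAt (fun u => 2 / 3 * (deriv (deriv (deriv b)) u * deriv (deriv a) u -
      deriv (deriv b) u * deriv (deriv (deriv a)) u)) (2 / 3 * (deriv (deriv (deriv (deriv b))) 0 *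
      deriv (deriv a) 0)) 0 := by
      refine ((((smooth_hasDerivAt sb3 0).mul (smooth_hasDerivAt sa2 0)).sub
        ((smooth_hasDerivAt sb2 0).mul (smooth_hasDerivAt sa3 0))).const_mul
          (2 / 3 : ℝ)).congr_deriv ?_
      rw [hb3, hb2]; ring
    have hc : ContinuousAt (fun u => ((deriv (deriv a) u) ^ 2)⁻¹ * (√(h (u, 0)))⁻¹) 0 := by
      have c1 := sa2.continuous
      have c2 := hh.continuous
      refine ContinuousAt.mul (ContinuousAt.inv₀ (by fun_prop) (by positivity))
        (ContinuousAt.inv₀ (by fun_prop) (Real.sqrt_pos.2 hh0pos).ne')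
    refine (hasDerivAt_mul_cont hn (by simp [hb3, hb2]) hc).congr_of_eventuallyEq ?_
    filter_upwards [key] with u hu
    have := hu.2
    rw [div_eq_mul_inv] at this
    linear_combination (1 / 3) * this
  have hRL : HasFDerivAt R (fderiv ℝ R (0, 0)) (0, 0) :=
    (hR.differentiable (by simp) _).hasFDerivAt
  have hk : fderiv ℝ R (0, 0) (1, 0) ≠ 0 := by
    have h1 : HasDerivAt (fun u : ℝ => (u, (0 : ℝ))) (1, 0) 0 :=
      (hasDerivAt_id (0 : ℝ)).prodMk (hasDerivAt_const 0 (0 : ℝ))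
    have h2 := (HasFDerivAt.comp_hasDerivAt (l := R) (f := fun u : ℝ => (u, (0 : ℝ))) 0 hRL h1)
    rw [h2.unique hRd]
    have := Real.sqrt_pos.2 hh0pos
    have := hpos.ne'
    positivity
  set RL := fderiv ℝ R (0, 0) with hRLdef
  have hRsplit : ∀ x y, RL (x, y) = x * RL (1, 0) + y * RL (0, 1) := by
    intro x y
    have : ((x, y) : ℝ × ℝ) = x • (1, 0) + y • (0, 1) := by simp
    rw [this, map_add, map_smul, map_smul]; rfl
  have hf0 : (fun p : ℝ × ℝ => ![p.1 + p.2, a p.1 + p.2 * deriv a p.1,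
      b p.1 + p.2 * deriv b p.1]) (0, 0) = 0 := by
    ext i; fin_cases i <;> simp [ha0, hb0]
  have hP0 : P (0, 0) = 0 := by
    have h1 := hPQ 0 0
    have h2 := hZe.self_of_nhds
    simp only [Function.comp] at h2
    rw [hρ0] at h2
    simp [hZ0, hb0] at h2
    simp [h2] at h1
    exact h1.symm
  refine ⟨fun p => (R (p.1 + p.2, V p ^ 2), V p), fun X => ![R (X 0, a (X 0) - X 1),
    a (X 0) - X 1, X 2 - P (X 0, a (X 0) - X 1)], ?_, ?_, by simp [hV, hR0], ?_, ?_⟩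
  · have hin : HasFDerivAt (fun p : ℝ × ℝ => (p.1 + p.2, V p ^ 2))
      ((ContinuousLinearMap.fst ℝ ℝ ℝ + ContinuousLinearMap.snd ℝ ℝ ℝ).prod 0) (0, 0) := by
      refine (hasFDerivAt_fst.add hasFDerivAt_snd).prodMk ((hVd.pow 2).congr_fderiv ?_)
      simp [hV]
    have hRL' : HasFDerivAt R RL ((fun p : ℝ × ℝ => (p.1 + p.2, V p ^ 2)) (0, 0)) := by
      simpa [hV] using hRL
    refine LD.of_prod ?_ hVs (hRL'.comp (0, 0) hin) hVd ?_
    · filter_upwards [hVs] with x hx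
      exact hR.contDiffAt.comp (g := R) x (f := fun p : ℝ × ℝ => (p.1 + p.2, V p ^ 2)) (by fun_prop)
    · intro x y h1 h2
      have h3 : √(h (0, 0)) ≠ 0 := (Real.sqrt_pos.2 hh0pos).ne'
      simp [h3] at h2
      subst h2
      simp only [ContinuousLinearMap.comp_apply, ContinuousLinearMap.prod_apply] at h1
      rw [hRsplit] at h1
      simp [hk] at h1
      exact ⟨h1, rfl⟩
  · rw [hf0]
    have hp := hasFDerivAt_coord 0
    have had : HasFDerivAt (fun X : Fin 3 → ℝ => a (X 0))
        (deriv a 0 • (ContinuousLinearMap.proj 0 : (Fin 3 → ℝ) →L[ℝ] ℝ)) 0 :=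
      (smooth_hasDerivAt ha _).comp_hasFDerivAt (f := fun X : Fin 3 → ℝ => X 0) 0 (hp 0)
    have hy := had.sub (hp 1)
    have hxy := (hp 0).prodMk hy
    have hRL' : HasFDerivAt R RL ((fun X : Fin 3 → ℝ => (X 0, a (X 0) - X 1)) 0) := by
      simpa [ha0] using hRL
    have hPL' : HasFDerivAt P (fderiv ℝ P (0, 0))
        ((fun X : Fin 3 → ℝ => (X 0, a (X 0) - X 1)) 0) := by
      simpa [ha0] using (hP.differentiable (by simp) (0, 0)).hasFDerivAt
    refine LD.of_pi3 (Eventually.of_forall fun y => by fun_prop)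
      (Eventually.of_forall fun y => by fun_prop) (Eventually.of_forall fun y => by fun_prop)
      (hRL'.comp 0 hxy) hy ((hp 2).sub (hPL'.comp 0 hxy)) ?_
    intro x h1 h2 h3
    simp only [ContinuousLinearMap.comp_apply, ContinuousLinearMap.prod_apply] at h1
    rw [h2, hRsplit] at h1
    simp [hk] at h1
    have h3' : x 2 - fderiv ℝ P (0, 0) (x 0,
        (deriv a 0 • (ContinuousLinearMap.proj 0 : (Fin 3 → ℝ) →L[ℝ] ℝ) -
          (ContinuousLinearMap.proj 1 : (Fin 3 → ℝ) →L[ℝ] ℝ)) x) = 0 := h3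
    rw [h2, h1] at h3'
    have h2' : deriv a 0 * x 0 - x 1 = 0 := h2
    rw [h1] at h2'
    have h00 : ((0 : ℝ), (0 : ℝ)) = 0 := rfl
    rw [h00, map_zero, sub_zero] at h3'
    exact ⟨h1, by linarith, h3'⟩
  · rw [hf0]
    ext i; fin_cases i <;> simp [crossCap, hR0, hP0, ha0]
  · have hΦc := hΦ.continuousAt
    have hΦt : Tendsto (fun x : ℝ × ℝ => (x.1 + x.2, V x)) (𝓝 (0, 0)) (𝓝 (0, 0)) := by
      have := hΦc.tendsto
      rwa [hΦ1] at this
    have hut : Tendsto (fun x : ℝ × ℝ => x.1 + x.2) (𝓝 (0, 0)) (𝓝 0) := by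
      have : Continuous (fun x : ℝ × ℝ => x.1 + x.2) := by fun_prop
      simpa using this.tendsto (0, 0)
    filter_upwards [hev, hρl, hΦt.eventually hZe, hut.eventually key] with p h1 h2 h3 h4
    have hV2 : a (p.1 + p.2) - (a p.1 + p.2 * deriv a p.1) = V p ^ 2 := by
      rw [hV]
      simp only
      rw [mul_pow, Real.sq_sqrt h1.le]
      have := htay p.1 p.2
      linarith
    have hZ : b p.1 + p.2 * deriv b p.1 = P (p.1 + p.2, V p ^ 2) +
        V p ^ 3 * R (p.1 + p.2, V p ^ 2) := by
      have e := hPQ (p.1 + p.2) (V p)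
      rw [h3, hQR, h4.1] at e
      simp only [Function.comp, h2] at e
      simp only [hZ0] at e
      linear_combination e
    ext i
    fin_cases i
    · simp [crossCap, hV2]
    · simp [crossCap, hV2]
    · simp [crossCap, hV2, hZ]; ring

theorem deriv_eventuallyEq {z F F' : ℝ → ℝ} {t₀ : ℝ} (h : z =ᶠ[𝓝 t₀] F)
    (hF : ∀ t, HasDerivAt F (F' t) t) : deriv z =ᶠ[𝓝 t₀] F' := by
  filter_upwards [h.eventually_nhds] with t ht
  rw [Filter.EventuallyEq.deriv_eq ht, (hF t).deriv]

theorem chain_four {b x z : ℝ → ℝ} (hb : ContDiff ℝ ∞ b) (hx : ContDiff ℝ ∞ x) {t₀ : ℝ}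
    (hx0 : x t₀ = 0) (hx1 : deriv x t₀ = 1) (h : z =ᶠ[𝓝 t₀] fun t => b (x t)) :
    (deriv z =ᶠ[𝓝 t₀] fun t => deriv b (x t) * deriv x t) ∧
    deriv z t₀ = deriv b 0 ∧
    deriv (deriv z) t₀ = deriv (deriv b) 0 + deriv b 0 * deriv (deriv x) t₀ ∧
    deriv (deriv (deriv z)) t₀ = deriv (deriv (deriv b)) 0 +
      3 * deriv (deriv b) 0 * deriv (deriv x) t₀ + deriv b 0 * deriv (deriv (deriv x)) t₀ ∧
    deriv (deriv (deriv (deriv z))) t₀ = deriv (deriv (deriv (deriv b))) 0 +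
      6 * deriv (deriv (deriv b)) 0 * deriv (deriv x) t₀ +
      deriv (deriv b) 0 * (3 * deriv (deriv x) t₀ ^ 2 + 4 * deriv (deriv (deriv x)) t₀) +
      deriv b 0 * deriv (deriv (deriv (deriv x))) t₀ := by
  have hb1 := smooth_deriv hb
  have hb2 := smooth_deriv hb1
  have hb3 := smooth_deriv hb2
  have hx1' := smooth_deriv hx
  have hx2 := smooth_deriv hx1'
  have hx3 := smooth_deriv hx2
  have hcomp : ∀ f : ℝ → ℝ, ContDiff ℝ ∞ f → ∀ t,
      HasDerivAt (fun t => f (x t)) (deriv f (x t) * deriv x t) t := fun f hf t =>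
    HasDerivAt.comp (h := x) t (smooth_hasDerivAt hf _) (smooth_hasDerivAt hx t)
  have d1 := deriv_eventuallyEq h (hcomp b hb)
  have d2 := deriv_eventuallyEq d1 (F' := fun t => deriv (deriv b) (x t) * deriv x t ^ 2 +
    deriv b (x t) * deriv (deriv x) t) (fun t =>
      ((hcomp _ hb1 t).mul (smooth_hasDerivAt hx1' t)).congr_deriv (by ring))
  have d3 := deriv_eventuallyEq d2 (F' := fun t => deriv (deriv (deriv b)) (x t) * deriv x t ^ 3 +
    3 * deriv (deriv b) (x t) * deriv x t * deriv (deriv x) t +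
    deriv b (x t) * deriv (deriv (deriv x)) t) (fun t =>
      (((hcomp _ hb2 t).mul ((smooth_hasDerivAt hx1' t).pow 2)).add
        ((hcomp _ hb1 t).mul (smooth_hasDerivAt hx2 t))).congr_deriv (by
          simp only [Pi.pow_apply]; push_cast; ring))
  have d4 := deriv_eventuallyEq d3 (F' := fun t =>
    deriv (deriv (deriv (deriv b))) (x t) * deriv x t ^ 4 +
    6 * deriv (deriv (deriv b)) (x t) * deriv x t ^ 2 * deriv (deriv x) t +
    deriv (deriv b) (x t) * (3 * deriv (deriv x) t ^ 2 +
      4 * deriv x t * deriv (deriv (deriv x)) t) +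
    deriv b (x t) * deriv (deriv (deriv (deriv x))) t) (fun t =>
      ((((hcomp _ hb3 t).mul ((smooth_hasDerivAt hx1' t).pow 3)).add
        ((((hcomp _ hb2 t).const_mul 3).mul (smooth_hasDerivAt hx1' t)).mul
          (smooth_hasDerivAt hx2 t))).add
        ((hcomp _ hb1 t).mul (smooth_hasDerivAt hx3 t))).congr_deriv (by
          simp only [Pi.pow_apply, Pi.mul_apply]; push_cast; ring))
  refine ⟨d1, ?_, ?_, ?_, ?_⟩
  · rw [d1.self_of_nhds]; simp [hx0, hx1]
  · rw [d2.self_of_nhds]; simp [hx0, hx1]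
  · rw [d3.self_of_nhds]; simp [hx0, hx1]
  · rw [d4.self_of_nhds]; simp [hx0, hx1]

theorem curve_to_crossCap (x y z : ℝ → ℝ) (t₀ : ℝ) (hx : ContDiff ℝ ∞ x) (hy : ContDiff ℝ ∞ y)
    (hz : ContDiff ℝ ∞ z) (hx0 : x t₀ = 0) (hy0 : y t₀ = 0) (hz0 : z t₀ = 0)
    (hx1 : deriv x t₀ = 1) (hy1 : deriv y t₀ = 0) (hz1 : deriv z t₀ = 0)
    (hy2 : deriv (deriv y) t₀ = 1) (hz2 : deriv (deriv z) t₀ = 0)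
    (hz3 : deriv (deriv (deriv z)) t₀ = 0) (hz4 : deriv (deriv (deriv (deriv z))) t₀ = 1) :
    GE (fun p : ℝ × ℝ => ![x p.1 + p.2 * deriv x p.1, y p.1 + p.2 * deriv y p.1,
      z p.1 + p.2 * deriv z p.1]) (t₀, (0 : ℝ)) crossCap ((0 : ℝ), (0 : ℝ)) := by
  have hxd := smooth_hasDerivAt hx t₀
  rw [hx1] at hxd
  have hxLD : LD x t₀ := by
    refine LD.of_injective (Eventually.of_forall fun y => hx.contDiffAt) _ hxd.hasFDerivAt ?_
    intro v hv
    simpa using hv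
  obtain ⟨φ, hφs, hφ0, hφl, -⟩ := hxLD.local_inverse
  rw [hx0] at hφs hφ0
  have mk : ∀ w : ℝ → ℝ, ContDiff ℝ ∞ w → ∃ a, ContDiff ℝ ∞ a ∧ w =ᶠ[𝓝 t₀] fun t => a (x t) := by
    intro w hw
    obtain ⟨a, ha, -, hae⟩ := cut_off (w ∘ φ) 0 (by
      filter_upwards [hφs] with u hu
      exact hw.contDiffAt.comp u hu)
    refine ⟨a, ha, ?_⟩
    have hxt : Tendsto x (𝓝 t₀) (𝓝 0) := by
      have := hx.continuous.tendsto t₀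
      rwa [hx0] at this
    filter_upwards [hxt.eventually hae, hφl] with t h1 h2
    rw [h1, Function.comp, h2]
  obtain ⟨a, ha, hya⟩ := mk y hy
  obtain ⟨b, hb, hzb⟩ := mk z hz
  obtain ⟨ya1, e1, e2, -, -⟩ := chain_four ha hx hx0 hx1 hya
  obtain ⟨zb1, f1, f2, f3, f4⟩ := chain_four hb hx hx0 hx1 hzb
  have ha0 : a 0 = 0 := by
    have := hya.self_of_nhds
    simp only [hx0] at this
    rw [← this, hy0]
  have hb0 : b 0 = 0 := by
    have := hzb.self_of_nhds
    simp only [hx0] at this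
    rw [← this, hz0]
  have ha1 : deriv a 0 = 0 := by rw [← e1, hy1]
  have ha2 : deriv (deriv a) 0 = 1 := by
    rw [hy2, ha1] at e2; linarith
  have hb1 : deriv b 0 = 0 := by rw [← f1, hz1]
  have hb2 : deriv (deriv b) 0 = 0 := by
    rw [hz2, hb1] at f2; linarith
  have hb3 : deriv (deriv (deriv b)) 0 = 0 := by
    rw [hz3, hb1, hb2] at f3; linarith
  have hb4 : deriv (deriv (deriv (deriv b))) 0 = 1 := by
    rw [hz4, hb1, hb2, hb3] at f4; linarith
  refine GE.trans (q := ((0 : ℝ), (0 : ℝ))) ?_ (graph_to_crossCap a b ha hb ha0 hb0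
    (by rw [ha2]; norm_num) hb2 hb3 (by rw [hb4]; norm_num))
  have hx1s := smooth_deriv hx
  refine ⟨fun p => (x p.1, p.2 * deriv x p.1), id, ?_, ⟨Eventually.of_forall fun _ => contDiffAt_id,
    ContinuousLinearEquiv.refl ℝ _, hasFDerivAt_id _⟩, by simp [hx0], ?_, ?_⟩
  · have g1 : HasFDerivAt (fun p : ℝ × ℝ => x p.1) ((1 : ℝ) • ContinuousLinearMap.fst ℝ ℝ ℝ)
        (t₀, 0) := hxd.comp_hasFDerivAt (f := Prod.fst) (t₀, (0 : ℝ)) hasFDerivAt_fst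
    have g2 : HasFDerivAt (fun p : ℝ × ℝ => deriv x p.1)
        (deriv (deriv x) t₀ • ContinuousLinearMap.fst ℝ ℝ ℝ) (t₀, 0) :=
      (smooth_hasDerivAt hx1s t₀).comp_hasFDerivAt (f := Prod.fst) (t₀, (0 : ℝ)) hasFDerivAt_fst
    refine LD.of_prod (Eventually.of_forall fun y => by fun_prop)
      (Eventually.of_forall fun y => by fun_prop) g1 (hasFDerivAt_snd.mul g2) ?_
    intro u v h1 h2
    simp [hx1] at h1 h2
    exact ⟨h1, h2⟩
  · ext i; fin_cases i <;> simp [hx0, hy0, hz0, ha0, hb0]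
  · have ht : Tendsto (Prod.fst : ℝ × ℝ → ℝ) (𝓝 (t₀, 0)) (𝓝 t₀) := continuous_fst.tendsto _
    filter_upwards [ht.eventually hya, ht.eventually hzb, ht.eventually ya1, ht.eventually zb1]
      with p h1 h2 h3 h4
    ext i
    fin_cases i
    · simp
    · simp [h1, h3]; ring
    · simp [h2, h4]; ring

theorem deriv_functional {g : ℝ → Fin 3 → ℝ} {f : ℝ → ℝ} {t₀ : ℝ} (l : (Fin 3 → ℝ) →L[ℝ] ℝ)
    (c : ℝ) (hg : ∀ᶠ t in 𝓝 t₀, DifferentiableAt ℝ g t) (h : f =ᶠ[𝓝 t₀] fun t => l (g t) + c) :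
    deriv f =ᶠ[𝓝 t₀] fun t => l (deriv g t) + 0 := by
  filter_upwards [h.eventually_nhds, hg] with t ht hgt
  rw [Filter.EventuallyEq.deriv_eq ht, add_zero]
  exact ((l.hasFDerivAt.comp_hasDerivAt t hgt.hasDerivAt).add_const c).deriv

theorem tangent_to_crossCap (I : Set ℝ) (hI : IsOpen I)
    (γ : ℝ → Fin 3 → ℝ) (hγ : ContDiffOn ℝ ∞ γ I)
    (t₀ : ℝ) (ht₀ : t₀ ∈ I)
    (hdep : ¬ LinearIndependent ℝ
      ![deriv γ t₀, deriv (deriv γ) t₀, deriv (deriv (deriv γ)) t₀])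
    (hind : LinearIndependent ℝ
      ![deriv γ t₀, deriv (deriv γ) t₀, deriv (deriv (deriv (deriv γ))) t₀]) :
    GE (fun p : ℝ × ℝ => γ p.1 + p.2 • deriv γ p.1) (t₀, (0 : ℝ)) crossCap
      ((0 : ℝ), (0 : ℝ)) := by
  let bs := basisOfLinearIndependentOfCardEqFinrank hind (by simp)
  let A : (Fin 3 → ℝ) ≃L[ℝ] (Fin 3 → ℝ) := bs.equivFun.toContinuousLinearEquiv
  have hA : ∀ i, A (![deriv γ t₀, deriv (deriv γ) t₀, deriv (deriv (deriv (deriv γ))) t₀] i) =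
      Pi.single i 1 := by
    intro i
    have h1 : bs i = ![deriv γ t₀, deriv (deriv γ) t₀, deriv (deriv (deriv (deriv γ))) t₀] i := by
      simp [bs]
    rw [← h1]
    ext j
    have := bs.equivFun_self i j
    simp only [A, LinearEquiv.coe_toContinuousLinearEquiv']
    rw [this, Pi.single_apply]
    simp [eq_comm]
  have hA0 : A (deriv γ t₀) = Pi.single 0 1 := hA 0
  have hA1 : A (deriv (deriv γ) t₀) = Pi.single 1 1 := hA 1
  have hA2 : A (deriv (deriv (deriv (deriv γ))) t₀) = Pi.single 2 1 := hA 2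
  have hA3 : A (deriv (deriv (deriv γ)) t₀) 2 = 0 := by
    by_contra hne
    apply hdep
    rw [Fintype.linearIndependent_iff]
    intro g hg
    rw [Fin.sum_univ_three] at hg
    simp only [Matrix.cons_val_zero, Matrix.cons_val_one, Matrix.cons_val] at hg
    have hg' := congrArg A hg
    rw [map_add, map_add, map_smul, map_smul, map_smul, hA0, hA1, map_zero] at hg'
    have k2 := congrFun hg' 2
    have k0 := congrFun hg' 0
    have k1 := congrFun hg' 1
    simp [hne] at k2
    simp [k2] at k0 k1
    intro i; fin_cases i
    · exact k0
    · exact k1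
    · exact k2
  let l : Fin 3 → (Fin 3 → ℝ) →L[ℝ] ℝ := fun i =>
    (ContinuousLinearMap.proj i : (Fin 3 → ℝ) →L[ℝ] ℝ).comp (A : (Fin 3 → ℝ) →L[ℝ] (Fin 3 → ℝ))
  have hl : ∀ i v, l i v = A v i := fun i v => rfl
  have hmem : ∀ᶠ t in 𝓝 t₀, t ∈ I := hI.mem_nhds ht₀
  have g0 := hγ
  have g1 : ContDiffOn ℝ ∞ (deriv γ) I := g0.deriv_of_isOpen hI (by simp)
  have g2 : ContDiffOn ℝ ∞ (deriv (deriv γ)) I := g1.deriv_of_isOpen hI (by simp)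
  have g3 : ContDiffOn ℝ ∞ (deriv (deriv (deriv γ))) I := g2.deriv_of_isOpen hI (by simp)
  have dd : ∀ g : ℝ → Fin 3 → ℝ, ContDiffOn ℝ ∞ g I → ∀ᶠ t in 𝓝 t₀, DifferentiableAt ℝ g t := by
    intro g hg
    filter_upwards [hmem] with t ht
    exact (hg.contDiffAt (hI.mem_nhds ht)).differentiableAt (by simp)
  have mk : ∀ i, ∃ x : ℝ → ℝ, ContDiff ℝ ∞ x ∧
      (x =ᶠ[𝓝 t₀] fun t => l i (γ t) + -(l i (γ t₀))) ∧
      (deriv x =ᶠ[𝓝 t₀] fun t => l i (deriv γ t)) ∧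
      x t₀ = 0 ∧ deriv x t₀ = l i (deriv γ t₀) ∧ deriv (deriv x) t₀ = l i (deriv (deriv γ) t₀) ∧
      deriv (deriv (deriv x)) t₀ = l i (deriv (deriv (deriv γ)) t₀) ∧
      deriv (deriv (deriv (deriv x))) t₀ = l i (deriv (deriv (deriv (deriv γ))) t₀) := by
    intro i
    obtain ⟨x, hx, -, hxe⟩ := cut_off (fun t => l i (γ t) + -(l i (γ t₀))) t₀ (by
      filter_upwards [hmem] with t ht
      have := hγ.contDiffAt (hI.mem_nhds ht)
      exact ((l i).contDiff.contDiffAt.comp t this).add contDiffAt_const)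
    have e1 := deriv_functional (l i) _ (dd _ g0) hxe
    have e2 := deriv_functional (l i) _ (dd _ g1) e1
    have e3 := deriv_functional (l i) _ (dd _ g2) e2
    have e4 := deriv_functional (l i) _ (dd _ g3) e3
    simp only [add_zero] at e1 e2 e3 e4
    exact ⟨x, hx, hxe, e1, by rw [hxe.self_of_nhds]; ring, e1.self_of_nhds, e2.self_of_nhds,
      e3.self_of_nhds, e4.self_of_nhds⟩
  obtain ⟨x, hx, x0, x1, hx0, hx1, -, -, -⟩ := mk 0
  obtain ⟨y, hy, y0, y1, hy0, hy1, hy2, -, -⟩ := mk 1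
  obtain ⟨z, hz, z0, z1, hz0, hz1, hz2, hz3, hz4⟩ := mk 2
  rw [hl, hA0] at hx1 hy1 hz1
  rw [hl, hA1] at hy2 hz2
  rw [hl, hA3] at hz3
  rw [hl, hA2] at hz4
  simp at hx1 hy1 hz1 hy2 hz2 hz4
  refine GE.trans (q := (t₀, (0 : ℝ))) ?_ (curve_to_crossCap x y z t₀ hx hy hz hx0 hy0 hz0 hx1 hy1
    hz1 hy2 hz2 hz3 hz4)
  have hmain : ∀ᶠ p : ℝ × ℝ in 𝓝 (t₀, 0), A (γ p.1 + p.2 • deriv γ p.1 - γ t₀) =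
      ![x p.1 + p.2 * deriv x p.1, y p.1 + p.2 * deriv y p.1, z p.1 + p.2 * deriv z p.1] := by
    have ht : Tendsto (Prod.fst : ℝ × ℝ → ℝ) (𝓝 (t₀, 0)) (𝓝 t₀) := continuous_fst.tendsto _
    filter_upwards [ht.eventually x0, ht.eventually x1, ht.eventually y0, ht.eventually y1,
      ht.eventually z0, ht.eventually z1] with p p1 p2 p3 p4 p5 p6
    rw [map_sub, map_add, map_smul]
    rw [p1, p2, p3, p4, p5, p6]
    simp only [hl]
    ext i
    fin_cases i <;> simp <;> ring
  refine ⟨id, fun X => A (X - γ t₀), ⟨Eventually.of_forall fun _ => contDiffAt_id,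
    ContinuousLinearEquiv.refl ℝ _, hasFDerivAt_id _⟩, ⟨?_, A, ?_⟩, rfl, ?_, ?_⟩
  · exact Eventually.of_forall fun X => by fun_prop
  · exact (A.hasFDerivAt (x := _)).comp _ ((hasFDerivAt_id _).sub_const _)
  · exact hmain.self_of_nhds
  · exact hmain


end Helpers

/-- For a `C^∞` curve `γ : I → ℝ³` on an open interval, if
`γ'(t₀), γ''(t₀), γ'''(t₀)` are linearly dependent while `γ'(t₀), γ''(t₀), γ⁽⁴⁾(t₀)`
are linearly independent, then the tangent surface `f(t,s) = γ(t) + s γ'(t)` is, as a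
germ at `(t₀, 0)`, diffeomorphic to the folded umbrella
`(t,s) ↦ (t+s, t²+2st, t⁴+4st³)`. -/
theorem euclidean_tangent_surface_folded_umbrella
    (I : Set ℝ) (hI : IsOpen I) (hI' : I.OrdConnected)
    (γ : ℝ → Fin 3 → ℝ) (hγ : ContDiffOn ℝ (⊤ : ℕ∞) γ I)
    (t₀ : ℝ) (ht₀ : t₀ ∈ I)
    (hdep : ¬ LinearIndependent ℝ
      ![deriv γ t₀, deriv (deriv γ) t₀, deriv (deriv (deriv γ)) t₀])
    (hind : LinearIndependent ℝ
      ![deriv γ t₀, deriv (deriv γ) t₀, deriv (deriv (deriv (deriv γ))) t₀]) :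
    GermDiffeomorphic
      (fun p : ℝ × ℝ => γ p.1 + p.2 • deriv γ p.1) (t₀, (0 : ℝ))
      (fun p : ℝ × ℝ =>
        ![p.1 + p.2, p.1 ^ 2 + 2 * p.2 * p.1, p.1 ^ 4 + 4 * p.2 * p.1 ^ 3])
      ((0 : ℝ), (0 : ℝ)) := by
  have hc0 : ContinuousAt γ t₀ := hγ.continuousOn.continuousAt (hI.mem_nhds ht₀)
  have hd : ContDiffOn ℝ (⊤ : ℕ∞) (deriv γ) I := hγ.deriv_of_isOpen hI (by simp)
  have hc1 : ContinuousAt (deriv γ) t₀ := hd.continuousOn.continuousAt (hI.mem_nhds ht₀)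
  refine GE.germ ?_ ((tangent_to_crossCap I hI γ hγ t₀ ht₀ hdep hind).trans crossCap_to_umbrella)
  have h1 : ContinuousAt (fun p : ℝ × ℝ => γ p.1) (t₀, 0) :=
    ContinuousAt.comp (f := Prod.fst) (x := (t₀, (0 : ℝ))) hc0 continuousAt_fst
  have h2 : ContinuousAt (fun p : ℝ × ℝ => deriv γ p.1) (t₀, 0) :=
    ContinuousAt.comp (f := Prod.fst) (x := (t₀, (0 : ℝ))) hc1 continuousAt_fst
  exact h1.add (continuousAt_snd.smul h2)
end
end

section
/- Let m ≥ 3 and let γ : I → ℝ^m be a C^∞ curve on an open interval I such that for every t ∈ I the vectors γ'(t), γ''(t) are linearly independent and γ'''(t) lies in the span of γ'(t) and γ''(t) (γ is torsionless with respect to the flat connection). Then for every t₀ ∈ I the tangent surface f(t,s) = γ(t) + s γ'(t) is, as a germ at (t₀, 0) ∈ I × ℝ, diffeomorphic to the fold (u,w) ↦ (u, w², 0, …, 0) : ℝ² → ℝ^m; in particular f is generically two-to-one near (t₀,0). -/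
open Set

noncomputable section

open Topology Filter

lemma aux_param (n : ℕ) : ∀ (k : ℕ) (g : ℝ → ℝ), ContDiff ℝ (⊤ : ℕ∞) g →
    ContDiff ℝ n (fun p : ℝ × ℝ => ∫ r in (0:ℝ)..1, r ^ k * g (p.1 - r * p.2)) := by
  induction n with
  | zero =>
    intro k g hg
    have hc := hg.continuous
    rw [Nat.cast_zero, contDiff_zero]
    apply intervalIntegral.continuous_parametric_intervalIntegral_of_continuous'
    fun_prop
  | succ n ih =>
    intro k g hg
    have hg' : ContDiff ℝ (⊤ : ℕ∞) (deriv g) := (contDiff_infty_iff_deriv.1 hg).2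
    have hgd : Differentiable ℝ g := (contDiff_infty_iff_deriv.1 hg).1
    have hc := hg.continuous
    have hc' := hg'.continuous
    let F' : ℝ × ℝ → ℝ → (ℝ × ℝ →L[ℝ] ℝ) := fun p r =>
      (r ^ k * deriv g (p.1 - r * p.2)) • ContinuousLinearMap.fst ℝ ℝ ℝ
        - (r ^ (k+1) * deriv g (p.1 - r * p.2)) • ContinuousLinearMap.snd ℝ ℝ ℝ
    have hF'c : Continuous (Function.uncurry F') := by
      unfold F' Function.uncurry
      fun_prop
    have key : ∀ p : ℝ × ℝ, HasFDerivAt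
        (fun p : ℝ × ℝ => ∫ r in (0:ℝ)..1, r ^ k * g (p.1 - r * p.2))
        (∫ r in (0:ℝ)..1, F' p r) p := by
      intro p
      obtain ⟨C, hC⟩ := ((isCompact_closedBall p 1).prod (isCompact_Icc (a := (0:ℝ)) (b := 1))).exists_bound_of_continuousOn
        (f := Function.uncurry F') hF'c.continuousOn
      refine intervalIntegral.hasFDerivAt_integral_of_dominated_of_fderiv_le
        (s := Metric.closedBall p 1) (bound := fun _ => C) (F' := F')
        (Metric.closedBall_mem_nhds p one_pos) ?_ ?_ ?_ ?_ ?_ ?_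
      · refine Eventually.of_forall fun x => Continuous.aestronglyMeasurable ?_
        fun_prop
      · apply Continuous.intervalIntegrable
        fun_prop
      · apply Continuous.aestronglyMeasurable
        exact hF'c.comp (by fun_prop : Continuous fun r : ℝ => (p, r))
      · refine Eventually.of_forall fun t ht x hx => ?_
        have ht' : t ∈ Icc (0:ℝ) 1 := by
          rw [uIoc_of_le zero_le_one] at ht
          exact ⟨ht.1.le, ht.2⟩
        exact hC (x, t) ⟨hx, ht'⟩
      · exact intervalIntegrable_const
      · refine Eventually.of_forall fun t ht x hx => ?_
        have h1 : HasFDerivAt (fun x : ℝ × ℝ => x.1 - t * x.2)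
            (ContinuousLinearMap.fst ℝ ℝ ℝ - t • ContinuousLinearMap.snd ℝ ℝ ℝ) x :=
          hasFDerivAt_fst.sub (hasFDerivAt_snd.const_mul t)
        have h2 := ((hgd (x.1 - t * x.2)).hasDerivAt.comp_hasFDerivAt x h1).const_mul (t ^ k)
        refine h2.congr_fderiv ?_
        ext <;> simp [F'] <;> ring
    rw [Nat.cast_succ, contDiff_succ_iff_hasFDerivAt]
    refine ⟨_, ?_, key⟩
    have e : (fun p => ∫ r in (0:ℝ)..1, F' p r) = fun p : ℝ × ℝ =>
        (∫ r in (0:ℝ)..1, r ^ k * deriv g (p.1 - r * p.2)) • ContinuousLinearMap.fst ℝ ℝ ℝ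
        - (∫ r in (0:ℝ)..1, r ^ (k+1) * deriv g (p.1 - r * p.2)) •
          ContinuousLinearMap.snd ℝ ℝ ℝ := by
      funext p
      simp only [F']
      rw [intervalIntegral.integral_sub, intervalIntegral.integral_smul_const,
        intervalIntegral.integral_smul_const]
      · apply Continuous.intervalIntegrable
        fun_prop
      · apply Continuous.intervalIntegrable
        fun_prop
    rw [e]
    exact ((ih k _ hg').smul contDiff_const).sub ((ih (k+1) _ hg').smul contDiff_const)

lemma aux_param' (k : ℕ) (g : ℝ → ℝ) (hg : ContDiff ℝ (⊤ : ℕ∞) g) :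
    ContDiff ℝ (⊤ : ℕ∞) (fun p : ℝ × ℝ => ∫ r in (0:ℝ)..1, r ^ k * g (p.1 - r * p.2)) :=
  contDiff_infty.2 fun n => aux_param n k g hg

lemma aux_taylor (φ : ℝ → ℝ) (hφ : ContDiff ℝ (⊤ : ℕ∞) φ) (u w : ℝ) :
    φ u - φ (u - w) - deriv φ (u - w) * w
      = w ^ 2 * ∫ r in (0:ℝ)..1, r ^ 1 * deriv (deriv φ) (u - r * w) := by
  have h1 := contDiff_infty_iff_deriv.1 hφ
  have h2 := contDiff_infty_iff_deriv.1 h1.2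
  have hc := h2.2.continuous
  have := intervalIntegral.integral_eq_sub_of_hasDerivAt (a := 0) (b := 1)
    (f := fun r : ℝ => - (r * w * deriv φ (u - r * w)) - φ (u - r * w))
    (f' := fun r => w ^ 2 * (r ^ 1 * deriv (deriv φ) (u - r * w))) ?_ ?_
  · rw [intervalIntegral.integral_const_mul] at this
    rw [this]; simp; ring
  · intro r _
    have hl : HasDerivAt (fun r : ℝ => u - r * w) (-w) r := by
      simpa using ((hasDerivAt_id r).mul_const w).const_sub u
    have d1 := (h1.1 (u - r * w)).hasDerivAt.comp r hl
    have d2 := (h2.1 (u - r * w)).hasDerivAt.comp r hl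
    have d3 := ((((hasDerivAt_id r).mul_const w).mul d2).neg).sub d1
    refine d3.congr_deriv ?_
    simp; ring
  · apply Continuous.intervalIntegrable
    fun_prop

lemma aux_diffeo {E F : Type*} [NormedAddCommGroup E] [NormedSpace ℝ E] [CompleteSpace E]
    [NormedAddCommGroup F] [NormedSpace ℝ F] (σ : E → F) (p : E) (A : E ≃L[ℝ] F)
    (hs : ∀ᶠ x in 𝓝 p, ContDiffAt ℝ (⊤ : ℕ∞) σ x) (hA : HasFDerivAt σ (A : E →L[ℝ] F) p)
    (W : Set E) (hW : W ∈ 𝓝 p) :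
    ∃ U ⊆ W, p ∈ U ∧ SmoothDiffeoOn σ U := by
  have h0' : ((⊤ : ℕ∞) : WithTop ℕ∞) ≠ 0 := by simp
  have hp := hs.self_of_nhds
  let e := hp.toOpenPartialHomeomorph σ hA h0'
  have he : (e : E → F) = σ := rfl
  have hinv : ∀ᶠ x in 𝓝 p, fderiv ℝ σ x ∈ range ((↑) : (E ≃L[ℝ] F) → E →L[ℝ] F) := by
    have hc : ContinuousAt (fderiv ℝ σ) p :=
      (hp.fderiv_right (m := 0) (by simp)).continuousAt
    apply hc
    rw [hA.fderiv]
    exact ContinuousLinearEquiv.nhds A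
  have hsrc : e.source ∈ 𝓝 p :=
    e.open_source.mem_nhds (hp.mem_toOpenPartialHomeomorph_source hA h0')
  obtain ⟨U, hU, hUo, hpU⟩ := mem_nhds_iff.1 (inter_mem (inter_mem hW hsrc) (inter_mem hs hinv))
  refine ⟨U, fun x hx => (hU hx).1.1, hpU, hUo, ?_, ?_, e.symm, ?_, ?_⟩
  · exact e.isOpen_image_of_subset_source hUo (fun x hx => (hU hx).1.2)
  · intro x hx
    have h1 : ContDiffAt ℝ (⊤ : ℕ∞) σ x := (hU hx).2.1
    exact h1.contDiffWithinAt
  · rintro _ ⟨x, hx, rfl⟩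
    obtain ⟨B, hB⟩ := (hU hx).2.2
    have h1 : ContDiffAt ℝ (⊤ : ℕ∞) σ x := (hU hx).2.1
    have hxs : x ∈ e.source := (hU hx).1.2
    have hx' : e.symm (σ x) = x := e.left_inv hxs
    refine (e.contDiffAt_symm (f₀' := B) (e.map_source hxs) ?_ ?_).contDiffWithinAt
    · rw [e.left_inv hxs, hB]
      exact (h1.differentiableAt h0').hasFDerivAt
    · rw [e.left_inv hxs]; exact h1
  · intro x hx
    exact e.left_inv (hU hx).1.2

lemma aux_global (φ : ℝ → ℝ) (S : Set ℝ) (hS : S ∈ 𝓝 (0:ℝ)) (hφ : ContDiffOn ℝ (⊤ : ℕ∞) φ S) :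
    ∃ φ' : ℝ → ℝ, ContDiff ℝ (⊤ : ℕ∞) φ' ∧ φ' =ᶠ[𝓝 0] φ := by
  obtain ⟨ε, hε, hb⟩ := Metric.mem_nhds_iff.1 hS
  let b : ContDiffBump (0:ℝ) := ⟨ε / 4, ε / 2, by positivity, by linarith⟩
  refine ⟨fun x => b x * φ x, ?_, ?_⟩
  · rw [contDiff_iff_contDiffAt]
    intro x
    by_cases hx : x ∈ Metric.ball (0:ℝ) ε
    · exact b.contDiff.contDiffAt.mul
        ((hφ.mono hb).contDiffAt (Metric.isOpen_ball.mem_nhds hx))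
    · have : (fun x => b x * φ x) =ᶠ[𝓝 x] fun _ => 0 := by
        have hx2 : (Metric.closedBall (0:ℝ) (ε/2))ᶜ ∈ 𝓝 x := by
          apply Metric.isClosed_closedBall.isOpen_compl.mem_nhds
          simp only [mem_compl_iff, Metric.mem_closedBall, Metric.mem_ball] at hx ⊢
          linarith
        filter_upwards [hx2] with z hz
        have : b z = 0 := by
          apply b.zero_of_le_dist
          simp only [mem_compl_iff, Metric.mem_closedBall] at hz
          exact (not_le.1 hz).le
        simp [this]
      exact contDiffAt_const.congr_of_eventuallyEq this
  · filter_upwards [b.eventuallyEq_one] with x hx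
    simp [hx]

lemma aux_ode (t₀ δ : ℝ) (hδ : 0 < δ) (z z1 a b : ℝ → ℝ) (K : ℝ)
    (hz : ∀ t ∈ Ioo (t₀ - δ) (t₀ + δ), HasDerivAt z (z1 t) t)
    (hz1 : ∀ t ∈ Ioo (t₀ - δ) (t₀ + δ), HasDerivAt z1 (a t * z t + b t * z1 t) t)
    (ha : ∀ t ∈ Ioo (t₀ - δ) (t₀ + δ), |a t| ≤ K)
    (hb : ∀ t ∈ Ioo (t₀ - δ) (t₀ + δ), |b t| ≤ K)
    (h0 : z t₀ = 0) (h1 : z1 t₀ = 0) : ∀ t ∈ Ioo (t₀ - δ) (t₀ + δ), z t = 0 := by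
  have ht₀ : t₀ ∈ Ioo (t₀ - δ) (t₀ + δ) := ⟨by linarith, by linarith⟩
  have hK : 0 ≤ K := (abs_nonneg _).trans (ha t₀ ht₀)
  have := ODE_solution_unique_of_mem_Ioo (E := ℝ × ℝ)
    (v := fun t p => (p.2, a t * p.1 + b t * p.2)) (s := fun _ => univ)
    (K := ⟨1 + 2 * K, by positivity⟩) (f := fun t => (z t, z1 t)) (g := fun _ => 0) 
    (a := t₀ - δ) (b := t₀ + δ) (t₀ := t₀) ?_ ht₀ ?_ ?_ ?_
  · intro t ht
    exact congrArg Prod.fst (this ht)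
  · intro t ht
    apply LipschitzOnWith.of_dist_le_mul
    rintro p - q -
    rw [dist_eq_norm, dist_eq_norm]
    have e1 : |p.1 - q.1| ≤ ‖p - q‖ := norm_fst_le (p - q)
    have e2 : |p.2 - q.2| ≤ ‖p - q‖ := norm_snd_le (p - q)
    have hn := norm_nonneg (p - q)
    change _ ≤ (1 + 2 * K) * ‖p - q‖
    apply norm_prod_le_iff.2 
    constructor
    · change |p.2 - q.2| ≤ _
      nlinarith [mul_nonneg hK hn]
    · change |(a t * p.1 + b t * p.2) - (a t * q.1 + b t * q.2)| ≤ _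
      have : (a t * p.1 + b t * p.2) - (a t * q.1 + b t * q.2)
        = a t * (p.1 - q.1) + b t * (p.2 - q.2) := by ring
      rw [this]
      refine (abs_add_le _ _).trans ?_
      rw [abs_mul, abs_mul]
      have := mul_le_mul (ha t ht) e1 (abs_nonneg _) hK
      have := mul_le_mul (hb t ht) e2 (abs_nonneg _) hK
      nlinarith
  · intro t ht
    exact ⟨(hz t ht).prodMk (hz1 t ht), mem_univ _⟩
  · intro t ht
    refine ⟨?_, mem_univ _⟩
    exact (hasDerivAt_const t (0 : ℝ × ℝ)).congr_deriv (by ext <;> simp)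
  · simp [h0, h1]

lemma aux_lin (k : ℕ) (v₁ v₂ : Fin (2 + k) → ℝ) (h : LinearIndependent ℝ ![v₁, v₂]) :
    ∃ L : (Fin (2 + k) → ℝ) ≃L[ℝ] (Fin (2 + k) → ℝ),
      L v₁ = Pi.single (Fin.castAdd k 0) 1 ∧ L v₂ = Pi.single (Fin.castAdd k 1) 1 := by
  let B := Module.Basis.sumExtend h
  have : Finite (Fin 2 ⊕ Module.Basis.sumExtendIndex h) := Module.Finite.finite_basis B
  have : Finite (Module.Basis.sumExtendIndex h) := 
    Finite.of_injective (Sum.inr : _ → Fin 2 ⊕ Module.Basis.sumExtendIndex h) Sum.inr_injective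
  haveI := Fintype.ofFinite (Module.Basis.sumExtendIndex h)
  have hc : Fintype.card (Module.Basis.sumExtendIndex h) = k := by
    have := Module.finrank_eq_card_basis B
    rw [Fintype.card_congr (Equiv.refl _ : _ ≃ Fin 2 ⊕ Module.Basis.sumExtendIndex h)] at this
    rw [Fintype.card_sum, Module.finrank_fin_fun, Fintype.card_fin] at this
    omega
  let e : Fin 2 ⊕ Module.Basis.sumExtendIndex h ≃ Fin (2 + k) :=
    (Equiv.sumCongr (Equiv.refl _) (Fintype.equivFinOfCardEq hc)).trans finSumFinEquiv
  let B' := B.reindex e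
  have h1 : ∀ i, B' (Fin.castAdd k i) = ![v₁, v₂] i := by
    intro i
    have : e.symm (Fin.castAdd k i) = Sum.inl i := by
      rw [Equiv.symm_apply_eq]; simp [e]
    simp only [B', Module.Basis.reindex_apply, this, B]
    simp [Module.Basis.sumExtend, Equiv.sumCongr]
    erw [Equiv.Set.sumDiffSubset_apply_inl]
    · simp
    · exact Module.Basis.subset_extend _
  refine ⟨B'.equivFun.toContinuousLinearEquiv, ?_, ?_⟩
  · have := h1 0
    change _ = v₁ at this
    rw [← this]
    ext j
    simp [Module.Basis.equivFun_self, Pi.single_apply, eq_comm]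
  · have := h1 1
    change _ = v₂ at this
    rw [← this]
    ext j
    simp [Module.Basis.equivFun_self, Pi.single_apply, eq_comm]

lemma aux_graph (I : Set ℝ) (hI : IsOpen I) (t₀ : ℝ) (ht₀ : t₀ ∈ I) (x y : ℝ → ℝ)
    (hx : ContDiffOn ℝ (⊤ : ℕ∞) x I) (hy : ContDiffOn ℝ (⊤ : ℕ∞) y I)
    (hx0 : x t₀ = 0) (hx1 : deriv x t₀ = 1) (hy1 : deriv y t₀ = 0)
    (hy2 : deriv (deriv y) t₀ = 1) :
    ∃ φ : ℝ → ℝ, ContDiff ℝ (⊤ : ℕ∞) φ ∧ deriv (deriv φ) 0 = 1 ∧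
      ∀ᶠ t in 𝓝 t₀, y t = φ (x t) ∧ deriv y t = deriv φ (x t) * deriv x t := by
  have h0' : ((⊤ : ℕ∞) : WithTop ℕ∞) ≠ 0 := by simp
  have hInh : ∀ t ∈ I, I ∈ 𝓝 t := fun t ht => hI.mem_nhds ht
  have hxd : ∀ t ∈ I, HasDerivAt x (deriv x t) t := fun t ht =>
    ((hx.contDiffAt (hInh t ht)).differentiableAt h0').hasDerivAt
  have hA : HasFDerivAt x ((ContinuousLinearEquiv.refl ℝ ℝ : ℝ ≃L[ℝ] ℝ) : ℝ →L[ℝ] ℝ) t₀ := by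
    have := (hxd t₀ ht₀).hasFDerivAt
    refine this.congr_fderiv ?_
    ext; simp [hx1]
  obtain ⟨J, hJI, htJ, hJo, hJim, -, ψ, hψ, hψx⟩ := aux_diffeo x t₀ _
    (by filter_upwards [hInh t₀ ht₀] with t ht using hx.contDiffAt (hInh t ht)) hA I (hInh t₀ ht₀)
  have hmap : MapsTo ψ (x '' J) I := by
    rintro _ ⟨t, ht, rfl⟩
    rw [hψx t ht]; exact hJI ht
  have hcomp : ContDiffOn ℝ (⊤ : ℕ∞) (y ∘ ψ) (x '' J) := hy.comp hψ hmap
  have h0im : x '' J ∈ 𝓝 (0:ℝ) := hJim.mem_nhds ⟨t₀, htJ, hx0⟩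
  obtain ⟨φ, hφ, hφe⟩ := aux_global (y ∘ ψ) _ h0im hcomp
  have h1 := contDiff_infty_iff_deriv.1 hφ
  have h2 := contDiff_infty_iff_deriv.1 h1.2
  have hxc : Tendsto x (𝓝 t₀) (𝓝 0) := by
    have := (hxd t₀ ht₀).continuousAt.tendsto
    rwa [hx0] at this
  have e1 : ∀ᶠ t in 𝓝 t₀, y t = φ (x t) := by
    filter_upwards [hxc.eventually hφe, hJo.mem_nhds htJ] with t ht htJ
    rw [ht, Function.comp, hψx t htJ]
  have e2 : ∀ᶠ t in 𝓝 t₀, deriv y t = deriv φ (x t) * deriv x t := by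
    filter_upwards [e1.eventually_nhds, hInh t₀ ht₀] with t ht htI
    have : y =ᶠ[𝓝 t] (φ ∘ x) := ht
    rw [this.deriv_eq]
    exact ((h1.1 (x t)).hasDerivAt.comp t (hxd t htI)).deriv
  refine ⟨φ, hφ, ?_, e1.and e2⟩
  have hx' : ContDiffOn ℝ (⊤ : ℕ∞) (deriv x) I := hx.deriv_of_isOpen hI (by simp)
  have hx'd := ((hx'.contDiffAt (hInh t₀ ht₀)).differentiableAt h0').hasDerivAt
  have e3 : deriv y =ᶠ[𝓝 t₀] fun t => deriv φ (x t) * deriv x t := e2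
  have e4 := e3.deriv_eq
  have e5 := (((h2.1 (x t₀)).hasDerivAt.comp t₀ (hxd t₀ ht₀)).mul hx'd).deriv
  have e6 : deriv φ 0 = 0 := by
    have := e2.self_of_nhds
    rw [hy1, hx1, hx0] at this
    linarith
  simp only [Function.comp_def] at e5
  rw [hy2] at e4
  have e7 := e4.trans e5
  simp only [hx0, hx1, e6] at e7
  linarith

lemma aux_sigma (I : Set ℝ) (hI : IsOpen I) (t₀ : ℝ) (ht₀ : t₀ ∈ I) (x : ℝ → ℝ)
    (hx : ContDiffOn ℝ (⊤ : ℕ∞) x I)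
    (hx0 : x t₀ = 0) (hx1 : deriv x t₀ = 1) (H : ℝ × ℝ → ℝ) (hH : ContDiff ℝ (⊤ : ℕ∞) H)
    (hH0 : 0 < H (0, 0)) (W : Set (ℝ × ℝ)) (hW : W ∈ 𝓝 (t₀, (0:ℝ))) :
    ∃ U ⊆ W, (t₀, (0:ℝ)) ∈ U ∧
      SmoothDiffeoOn (fun p : ℝ × ℝ => (x p.1 + p.2 * deriv x p.1,
        p.2 * deriv x p.1 * Real.sqrt (H (x p.1 + p.2 * deriv x p.1, p.2 * deriv x p.1)))) U ∧
      ∀ p ∈ U, 0 < H (x p.1 + p.2 * deriv x p.1, p.2 * deriv x p.1) := by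
  have h0' : ((⊤ : ℕ∞) : WithTop ℕ∞) ≠ 0 := by simp
  have hInh : ∀ t ∈ I, I ∈ 𝓝 t := fun t ht => hI.mem_nhds ht
  have hx' : ContDiffOn ℝ (⊤ : ℕ∞) (deriv x) I := hx.deriv_of_isOpen hI (by simp)
  let M1 : ℝ × ℝ → ℝ := fun p => x p.1 + p.2 * deriv x p.1
  let M2 : ℝ × ℝ → ℝ := fun p => p.2 * deriv x p.1
  have cx : ∀ p : ℝ × ℝ, p.1 ∈ I → ContDiffAt ℝ (⊤ : ℕ∞) (fun p : ℝ × ℝ => x p.1) p := fun p hp =>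
    (hx.contDiffAt (hInh _ hp)).comp p contDiffAt_fst
  have cx' : ∀ p : ℝ × ℝ, p.1 ∈ I → ContDiffAt ℝ (⊤ : ℕ∞) (fun p : ℝ × ℝ => deriv x p.1) p :=
    fun p hp => (hx'.contDiffAt (hInh _ hp)).comp p contDiffAt_fst
  have c2 : ∀ p : ℝ × ℝ, p.1 ∈ I → ContDiffAt ℝ (⊤ : ℕ∞) M2 p := fun p hp =>
    contDiffAt_snd.mul (cx' p hp)
  have c1 : ∀ p : ℝ × ℝ, p.1 ∈ I → ContDiffAt ℝ (⊤ : ℕ∞) M1 p := fun p hp =>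
    (cx p hp).add (c2 p hp)
  have cH : ∀ p : ℝ × ℝ, p.1 ∈ I → ContDiffAt ℝ (⊤ : ℕ∞) (fun p => H (M1 p, M2 p)) p := 
    fun p hp => hH.contDiffAt.comp p ((c1 p hp).prodMk (c2 p hp))
  have hM1 : M1 (t₀, 0) = 0 := by simp [M1, hx0]
  have hM2 : M2 (t₀, 0) = 0 := by simp [M2]
  have hIn : ∀ᶠ p : ℝ × ℝ in 𝓝 (t₀, 0), p.1 ∈ I :=
    continuous_fst.continuousAt.preimage_mem_nhds (hInh t₀ ht₀)
  have hpos : ∀ᶠ p : ℝ × ℝ in 𝓝 (t₀, 0), 0 < H (M1 p, M2 p) := by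
    apply (cH (t₀, 0) ht₀).continuousAt.eventually
    simp only [hM1, hM2]
    exact lt_mem_nhds hH0
  have cS : ∀ p : ℝ × ℝ, p.1 ∈ I → 0 < H (M1 p, M2 p) →
      ContDiffAt ℝ (⊤ : ℕ∞) (fun p => Real.sqrt (H (M1 p, M2 p))) p := fun p hp hh =>
    (cH p hp).sqrt hh.ne'
  let κ := Real.sqrt (H (0, 0))
  have hκ : κ ≠ 0 := (Real.sqrt_pos.2 hH0).ne'
  let A : (ℝ × ℝ) ≃L[ℝ] (ℝ × ℝ) := ContinuousLinearEquiv.equivOfInverse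
    ((ContinuousLinearMap.fst ℝ ℝ ℝ + ContinuousLinearMap.snd ℝ ℝ ℝ).prod
      (κ • ContinuousLinearMap.snd ℝ ℝ ℝ))
    ((ContinuousLinearMap.fst ℝ ℝ ℝ - κ⁻¹ • ContinuousLinearMap.snd ℝ ℝ ℝ).prod
      (κ⁻¹ • ContinuousLinearMap.snd ℝ ℝ ℝ))
    (by intro p; ext <;> simp [hκ]) (by intro p; ext <;> simp [hκ])
  have hd2 : HasFDerivAt M2 (ContinuousLinearMap.snd ℝ ℝ ℝ) (t₀, 0) := by
    have hd : HasFDerivAt (fun p : ℝ × ℝ => deriv x p.1) _ (t₀, (0:ℝ)) :=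
      ((cx' (t₀, 0) ht₀).differentiableAt h0').hasFDerivAt
    refine (hasFDerivAt_snd.mul hd).congr_fderiv ?_
    simp [hx1]
  have hd1 : HasFDerivAt M1 (ContinuousLinearMap.fst ℝ ℝ ℝ + ContinuousLinearMap.snd ℝ ℝ ℝ)
      (t₀, 0) := by
    refine HasFDerivAt.add ?_ hd2
    have hd : HasDerivAt x 1 (t₀, (0:ℝ)).1 := by
      have := ((hx.contDiffAt (hInh t₀ ht₀)).differentiableAt h0').hasDerivAt
      rwa [hx1] at this
    refine (hd.comp_hasFDerivAt (t₀, (0:ℝ)) hasFDerivAt_fst).congr_fderiv ?_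
    simp
  have hA : HasFDerivAt (fun p => (M1 p, M2 p * Real.sqrt (H (M1 p, M2 p))))
      (A : (ℝ × ℝ) →L[ℝ] (ℝ × ℝ)) (t₀, 0) := by
    have hS := ((cS (t₀, 0) ht₀ hpos.self_of_nhds).differentiableAt h0').hasFDerivAt
    have := hd1.prodMk (hd2.mul hS)
    refine this.congr_fderiv ?_
    simp only [hM1, hM2]
    ext <;> simp [A, κ]
  have hsm : ∀ᶠ p : ℝ × ℝ in 𝓝 (t₀, 0), ContDiffAt ℝ (⊤ : ℕ∞)
      (fun p => (M1 p, M2 p * Real.sqrt (H (M1 p, M2 p)))) p := by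
    filter_upwards [hIn, hpos] with p hp hh
    exact (c1 p hp).prodMk ((c2 p hp).mul (cS p hp hh))
  obtain ⟨U, hU, hpU, hUd⟩ := aux_diffeo _ _ A hsm hA (W ∩ {p | 0 < H (M1 p, M2 p)})
    (inter_mem hW hpos)
  exact ⟨U, fun p hp => (hU hp).1, hpU, hUd, fun p hp => (hU hp).2⟩

lemma aux_tau (m : ℕ) (i0 i1 : Fin m) (h01 : i0 ≠ i1)
    (L : (Fin m → ℝ) ≃L[ℝ] (Fin m → ℝ)) (φ : ℝ → ℝ) (hφ : ContDiff ℝ (⊤ : ℕ∞) φ)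
    (v₀ : Fin m → ℝ) :
    SmoothDiffeoOn (fun v => fun j : Fin m =>
      if j = i1 then φ (L (v - v₀) i0) - L (v - v₀) i1 else L (v - v₀) j) univ := by
  let S : (Fin m → ℝ) → (Fin m → ℝ) := fun z j => if j = i1 then φ (z i0) - z i1 else z j
  have hS : ContDiff ℝ (⊤ : ℕ∞) S := by
    rw [contDiff_pi]
    intro j
    by_cases hj : j = i1
    · simp only [S, hj, if_true]
      fun_prop
    · simp only [S, hj, if_false]
      fun_prop
  have hSS : ∀ z, S (S z) = z := by
    intro z; ext j
    by_cases hj : j = i1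
    · subst hj; simp [S, h01]
    · simp [S, hj]
  have hL := L.contDiff (n := ((⊤ : ℕ∞) : WithTop ℕ∞))
  have hLs := L.symm.contDiff (n := ((⊤ : ℕ∞) : WithTop ℕ∞))
  have himg : (fun v => S (L (v - v₀))) '' univ = univ := by
    rw [image_univ, range_eq_univ]
    intro w
    exact ⟨L.symm (S w) + v₀, by simp [hSS]⟩
  change SmoothDiffeoOn (fun v => S (L (v - v₀))) univ
  refine ⟨isOpen_univ, by rw [himg]; exact isOpen_univ, ?_, fun w => L.symm (S w) + v₀, ?_, ?_⟩
  · exact (hS.comp (hL.comp (contDiff_id.sub contDiff_const))).contDiffOn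
  · exact ((hLs.comp hS).add contDiff_const).contDiffOn
  · intro v _
    simp [hSS]

lemma aux_flat (m : ℕ) (I : Set ℝ) (hI : IsOpen I)
    (γ : ℝ → Fin m → ℝ) (hγ : ContDiffOn ℝ (⊤ : ℕ∞) γ I)
    (hdep : ∀ t ∈ I, deriv (deriv (deriv γ)) t ∈
      Submodule.span ℝ {deriv γ t, deriv (deriv γ) t}) (t₀ : ℝ) (ht₀ : t₀ ∈ I)
    (i0 i1 : Fin m) (L : (Fin m → ℝ) ≃L[ℝ] (Fin m → ℝ)) (h01 : i0 ≠ i1)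
    (hL1 : L (deriv γ t₀) = Pi.single i0 1) (hL2 : L (deriv (deriv γ) t₀) = Pi.single i1 1) :
    ∀ᶠ t in 𝓝 t₀, ∀ j, j ≠ i0 → j ≠ i1 →
      L (γ t - γ t₀) j = 0 ∧ L (deriv γ t) j = 0 := by
  have h0' : ((⊤ : ℕ∞) : WithTop ℕ∞) ≠ 0 := by simp
  have hInh : ∀ t ∈ I, I ∈ 𝓝 t := fun t ht => hI.mem_nhds ht
  have hγ1 : ContDiffOn ℝ (⊤ : ℕ∞) (deriv γ) I := hγ.deriv_of_isOpen hI (by simp)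
  have hγ2 : ContDiffOn ℝ (⊤ : ℕ∞) (deriv (deriv γ)) I := hγ1.deriv_of_isOpen hI (by simp)
  have hγ3 : ContDiffOn ℝ (⊤ : ℕ∞) (deriv (deriv (deriv γ))) I := hγ2.deriv_of_isOpen hI (by simp)
  let l : Fin m → ((Fin m → ℝ) →L[ℝ] ℝ) := fun j =>
    (ContinuousLinearMap.proj j).comp (L : (Fin m → ℝ) →L[ℝ] (Fin m → ℝ))
  have lapp : ∀ j v, l j v = L v j := fun _ _ => rfl
  have dd : ∀ (c : ℝ → Fin m → ℝ), ContDiffOn ℝ (⊤ : ℕ∞) c I → ∀ t ∈ I, ∀ j,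
      HasDerivAt (fun t => l j (c t)) (l j (deriv c t)) t := by
    intro c hc t ht j
    exact (l j).hasFDerivAt.comp_hasDerivAt t
      ((hc.contDiffAt (hInh t ht)).differentiableAt h0').hasDerivAt
  have cc : ∀ (c : ℝ → Fin m → ℝ), ContDiffOn ℝ (⊤ : ℕ∞) c I → ∀ j,
      ContinuousAt (fun t => l j (c t)) t₀ := by
    intro c hc j
    exact (dd c hc t₀ ht₀ j).continuousAt
  let D : ℝ → ℝ := fun t => l i0 (deriv γ t) * l i1 (deriv (deriv γ) t)
    - l i1 (deriv γ t) * l i0 (deriv (deriv γ) t)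
  have hDc : ContinuousAt D t₀ := ((cc _ hγ1 i0).mul (cc _ hγ2 i1)).sub
    ((cc _ hγ1 i1).mul (cc _ hγ2 i0))
  have hD0 : D t₀ = 1 := by
    simp [D, lapp, hL1, hL2, h01]
  let a : ℝ → ℝ := fun t => (l i0 (deriv (deriv (deriv γ)) t) * l i1 (deriv (deriv γ) t)
    - l i1 (deriv (deriv (deriv γ)) t) * l i0 (deriv (deriv γ) t)) / D t
  let b : ℝ → ℝ := fun t => (l i0 (deriv γ t) * l i1 (deriv (deriv (deriv γ)) t)
    - l i1 (deriv γ t) * l i0 (deriv (deriv (deriv γ)) t)) / D t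
  have hD1 : D t₀ ≠ 0 := by rw [hD0]; exact one_ne_zero
  have hac : ContinuousAt a t₀ := (((cc _ hγ3 i0).mul (cc _ hγ2 i1)).sub
    ((cc _ hγ3 i1).mul (cc _ hγ2 i0))).div hDc hD1
  have hbc : ContinuousAt b t₀ := (((cc _ hγ1 i0).mul (cc _ hγ3 i1)).sub
    ((cc _ hγ1 i1).mul (cc _ hγ3 i0))).div hDc hD1
  have hrel : ∀ t ∈ I, D t ≠ 0 → ∀ j, l j (deriv (deriv (deriv γ)) t) =
      a t * l j (deriv γ t) + b t * l j (deriv (deriv γ) t) := by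
    intro t ht hD j
    obtain ⟨p, q, hpq⟩ := Submodule.mem_span_pair.1 (hdep t ht)
    have hj : ∀ j, l j (deriv (deriv (deriv γ)) t) =
        p * l j (deriv γ t) + q * l j (deriv (deriv γ) t) := by
      intro j; rw [← hpq]; simp
    have hap : a t = p := by
      simp only [a]; rw [div_eq_iff hD, hj i0, hj i1]; simp only [D]; ring
    have hbq : b t = q := by
      simp only [b]; rw [div_eq_iff hD, hj i0, hj i1]; simp only [D]; ring
    rw [hap, hbq, hj]
  let K : ℝ := max (|a t₀| + 1) (|b t₀| + 1)
  have ha : ∀ᶠ t in 𝓝 t₀, |a t| < K :=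
    hac.abs.eventually (gt_mem_nhds ((lt_add_one _).trans_le (le_max_left _ _)))
  have hb : ∀ᶠ t in 𝓝 t₀, |b t| < K :=
    hbc.abs.eventually (gt_mem_nhds ((lt_add_one _).trans_le (le_max_right _ _)))
  have hDe : ∀ᶠ t in 𝓝 t₀, D t ≠ 0 := hDc.eventually_ne hD1
  obtain ⟨δ, hδ, hball⟩ := Metric.eventually_nhds_iff_ball.1
    (((ha.and hb).and hDe).and (hInh t₀ ht₀))
  rw [Real.ball_eq_Ioo] at hball
  have ht₀δ : t₀ ∈ Ioo (t₀ - δ) (t₀ + δ) := ⟨by linarith, by linarith⟩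
  have hz : ∀ j, j ≠ i0 → j ≠ i1 → ∀ t ∈ Ioo (t₀ - δ) (t₀ + δ), l j (deriv γ t) = 0 := by
    intro j hj0 hj1
    refine aux_ode t₀ δ hδ (fun t => l j (deriv γ t)) (fun t => l j (deriv (deriv γ) t)) a b K
      ?_ ?_ ?_ ?_ ?_ ?_
    · intro t ht; exact dd _ hγ1 t (hball t ht).2 j
    · intro t ht
      exact (dd _ hγ2 t (hball t ht).2 j).congr_deriv (hrel t (hball t ht).2 (hball t ht).1.2 j)
    · intro t ht; exact (hball t ht).1.1.1.le
    · intro t ht; exact (hball t ht).1.1.2.le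
    · simp [lapp, hL1, hj0]
    · simp [lapp, hL2, hj1]
  filter_upwards [Ioo_mem_nhds ht₀δ.1 ht₀δ.2] with t ht j hj0 hj1
  refine ⟨?_, hz j hj0 hj1 t ht⟩
  have hder : ∀ s ∈ Ioo (t₀ - δ) (t₀ + δ), HasDerivAt (fun t => l j (γ t)) 0 s := by
    intro s hs
    have := dd _ hγ s (hball s hs).2 j
    rwa [hz j hj0 hj1 s hs] at this
  have := isOpen_Ioo.is_const_of_deriv_eq_zero isPreconnected_Ioo
    (fun s hs => (hder s hs).differentiableAt.differentiableWithinAt)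
    (fun s hs => (hder s hs).deriv) ht ht₀δ
  rw [← lapp, map_sub, sub_eq_zero]
  exact this

/-- If `γ : I → ℝ^m` (`m ≥ 3`) is `C^∞` on an open interval with
`γ'(t), γ''(t)` linearly independent and `γ'''(t) ∈ span{γ'(t), γ''(t)}` for all `t`
(torsionless for the flat connection), then for every `t₀ ∈ I` the tangent surface
`f(t,s) = γ(t) + s γ'(t)` is, as a germ at `(t₀, 0)`, diffeomorphic to the fold
`(u,w) ↦ (u, w², 0, …, 0)`. -/
theorem torsionless_flat_tangent_surface_is_fold (m : ℕ) (hm : 3 ≤ m)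
    (I : Set ℝ) (hI : IsOpen I) (hI' : I.OrdConnected)
    (γ : ℝ → Fin m → ℝ) (hγ : ContDiffOn ℝ (⊤ : ℕ∞) γ I)
    (hind : ∀ t ∈ I, LinearIndependent ℝ ![deriv γ t, deriv (deriv γ) t])
    (hdep : ∀ t ∈ I, deriv (deriv (deriv γ)) t ∈
      Submodule.span ℝ {deriv γ t, deriv (deriv γ) t}) :
    ∀ t₀ ∈ I,
      GermDiffeomorphic
        (fun p : ℝ × ℝ => γ p.1 + p.2 • deriv γ p.1) (t₀, (0 : ℝ))
        (fun p : ℝ × ℝ => fun j : Fin m =>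
          if j.val = 0 then p.1 else if j.val = 1 then p.2 ^ 2 else 0)
        ((0 : ℝ), (0 : ℝ)) := by
  intro t₀ ht₀
  obtain ⟨k, rfl⟩ := Nat.exists_eq_add_of_le (show 2 ≤ m by omega)
  obtain ⟨L, hL1, hL2⟩ := aux_lin k _ _ (hind t₀ ht₀)
  have hne : Fin.castAdd k (0 : Fin 2) ≠ Fin.castAdd k (1 : Fin 2) := by
    simp [Fin.ext_iff]
  have hi0 : ∀ j : Fin (2 + k), j.val = 0 ↔ j = Fin.castAdd k (0 : Fin 2) := by
    intro j; rw [Fin.ext_iff]; rfl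
  have hi1 : ∀ j : Fin (2 + k), j.val = 1 ↔ j = Fin.castAdd k (1 : Fin 2) := by
    intro j; rw [Fin.ext_iff]; rfl
  have hflat := aux_flat (2 + k) I hI γ hγ hdep t₀ ht₀ _ _ L hne hL1 hL2
  simp only [hi0, hi1]
  generalize Fin.castAdd k (0 : Fin 2) = i0 at *
  generalize Fin.castAdd k (1 : Fin 2) = i1 at *
  have h0' : ((⊤ : ℕ∞) : WithTop ℕ∞) ≠ 0 := by simp
  have hInh : ∀ t ∈ I, I ∈ 𝓝 t := fun t ht => hI.mem_nhds ht
  have hγ1 : ContDiffOn ℝ (⊤ : ℕ∞) (deriv γ) I := hγ.deriv_of_isOpen hI (by simp)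
  let l : Fin (2 + k) → ((Fin (2 + k) → ℝ) →L[ℝ] ℝ) := fun j =>
    (ContinuousLinearMap.proj j).comp (L : (Fin (2 + k) → ℝ) →L[ℝ] (Fin (2 + k) → ℝ))
  have lapp : ∀ j v, l j v = L v j := fun _ _ => rfl
  let X : Fin (2 + k) → ℝ → ℝ := fun j t => l j (γ t - γ t₀)
  have hX : ∀ j, ContDiffOn ℝ (⊤ : ℕ∞) (X j) I := fun j =>
    (l j).contDiff.comp_contDiffOn (hγ.sub contDiffOn_const)
  have hX1 : ∀ j, ∀ t ∈ I, deriv (X j) t = l j (deriv γ t) := by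
    intro j t ht
    exact ((l j).hasFDerivAt.comp_hasDerivAt t
      (((hγ.contDiffAt (hInh t ht)).differentiableAt h0').hasDerivAt.sub_const _)).deriv
  have hX2 : ∀ j, deriv (deriv (X j)) t₀ = l j (deriv (deriv γ) t₀) := by
    intro j
    have e : deriv (X j) =ᶠ[𝓝 t₀] fun t => l j (deriv γ t) := by
      filter_upwards [hInh t₀ ht₀] with t ht using hX1 j t ht
    rw [e.deriv_eq]
    exact ((l j).hasFDerivAt.comp_hasDerivAt t₀
      ((hγ1.contDiffAt (hInh t₀ ht₀)).differentiableAt h0').hasDerivAt).deriv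
  have hx0 : X i0 t₀ = 0 := by simp [X]
  have hx1 : deriv (X i0) t₀ = 1 := by rw [hX1 _ _ ht₀, lapp, hL1]; simp
  have hy1 : deriv (X i1) t₀ = 0 := by rw [hX1 _ _ ht₀, lapp, hL1]; simp [hne.symm]
  have hy2 : deriv (deriv (X i1)) t₀ = 1 := by rw [hX2, lapp, hL2]; simp
  obtain ⟨φ, hφ, hφ2, hφe⟩ := aux_graph I hI t₀ ht₀ (X i0) (X i1) (hX _) (hX _) hx0 hx1 hy1 hy2
  have hφ'' : ContDiff ℝ (⊤ : ℕ∞) (deriv (deriv φ)) :=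
    (contDiff_infty_iff_deriv.1 (contDiff_infty_iff_deriv.1 hφ).2).2
  let H : ℝ × ℝ → ℝ := fun p => ∫ r in (0:ℝ)..1, r ^ 1 * deriv (deriv φ) (p.1 - r * p.2)
  have hH : ContDiff ℝ (⊤ : ℕ∞) H := aux_param' 1 _ hφ''
  have hH0 : 0 < H (0, 0) := by
    simp [H, hφ2]
  have hgood : ∀ᶠ p : ℝ × ℝ in 𝓝 (t₀, 0), p.1 ∈ I ∧
      (X i1 p.1 = φ (X i0 p.1) ∧ deriv (X i1) p.1 = deriv φ (X i0 p.1) * deriv (X i0) p.1) ∧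
      ∀ j, j ≠ i0 → j ≠ i1 → L (γ p.1 - γ t₀) j = 0 ∧ L (deriv γ p.1) j = 0 := by
    have hc : Tendsto (fun p : ℝ × ℝ => p.1) (𝓝 (t₀, 0)) (𝓝 t₀) :=
      continuous_fst.continuousAt
    have h1 : ∀ᶠ t in 𝓝 t₀, t ∈ I := hInh t₀ ht₀
    exact hc.eventually (h1.and (hφe.and hflat))
  obtain ⟨U, hUW, hpU, hUd, hUpos⟩ := aux_sigma I hI t₀ ht₀ (X i0) (hX _) hx0 hx1 H hH hH0 _ hgood
  have main : ∀ p ∈ U, (fun j : Fin (2 + k) =>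
      if j = i1 then φ (L (γ p.1 + p.2 • deriv γ p.1 - γ t₀) i0)
        - L (γ p.1 + p.2 • deriv γ p.1 - γ t₀) i1
      else L (γ p.1 + p.2 • deriv γ p.1 - γ t₀) j) =
      fun j => if j = i0 then X i0 p.1 + p.2 * deriv (X i0) p.1 else if j = i1 then
        (p.2 * deriv (X i0) p.1 * Real.sqrt (H (X i0 p.1 + p.2 * deriv (X i0) p.1,
          p.2 * deriv (X i0) p.1))) ^ 2 else 0 := by
    intro p hp
    obtain ⟨hpI, ⟨hp1, hp2⟩, hp3⟩ := hUW hp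
    have hLj : ∀ j, L (γ p.1 + p.2 • deriv γ p.1 - γ t₀) j
        = X j p.1 + p.2 * deriv (X j) p.1 := by
      intro j
      have : γ p.1 + p.2 • deriv γ p.1 - γ t₀ = (γ p.1 - γ t₀) + p.2 • deriv γ p.1 := by abel
      rw [this, hX1 j _ hpI, ← lapp, map_add, map_smul, smul_eq_mul]
    funext j
    simp only [hLj]
    by_cases hj1 : j = i1
    · have hj0 : j ≠ i0 := by rw [hj1]; exact hne.symm
      rw [if_pos hj1, if_neg hj0, if_pos hj1, mul_pow, Real.sq_sqrt (hUpos p hp).le]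
      have := aux_taylor φ hφ (X i0 p.1 + p.2 * deriv (X i0) p.1) (p.2 * deriv (X i0) p.1)
      simp only [H]
      rw [← this, add_sub_cancel_right, hp1, hp2]
      ring
    · rw [if_neg hj1]
      by_cases hj0 : j = i0
      · rw [if_pos hj0, hj0]
      · rw [if_neg hj0, if_neg hj1, hX1 j _ hpI]
        have := hp3 j hj0 hj1
        change L (γ p.1 - γ t₀) j + p.2 * L (deriv γ p.1) j = 0
        rw [this.1, this.2]; ring
  refine ⟨U, univ, _, _, hUd, aux_tau (2 + k) i0 i1 hne L φ hφ (γ t₀), hpU, mem_univ _, ?_, ?_,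
    fun _ _ => mem_univ _, ?_⟩
  · simp [hx0]
  · have := main _ hpU
    simpa [hx0] using this
  · exact main
end
end
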